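/- Let G be a finitely generated residually finite group having a solvable subgroup of finite index. Let (G, X, 0) be an expansive pointed dynamical system with the shadowing property (with respect to some finite generating set of G) whose homoclinic points are dense in X. Then every asymptotically nilpotent endomorphism f : X → X of (G, X, 0) is nilpotent. -/

import Mathlib

/-- A group is residually finite if every nontrivial element survives in some finite
quotient. -/
def ResiduallyFinite (H : Type) [Group H] : Prop :=
  ∀ g : H, g ≠ 1 → ∃ (Q : Type) (_ : Group Q) (φ : H →* Q), Finite Q ∧ φ g ≠ 1

/-- A point `x` is homoclinic: `g • x` is eventually close to `x₀` outside finite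
subsets of `G`. -/
def Homoclinic (G : Type) [Group G] {X : Type} [MetricSpace X] [MulAction G X]
    (x₀ x : X) : Prop :=
  ∀ ε : ℝ, 0 < ε → ∃ E : Finset G, ∀ g : G, g ∉ E → dist (g • x) x₀ < ε


section abs

open Classical Pointwise

variable {G X : Type} [Group G]

/-- pseudo-orbits -/
def PO (S : Finset G) (R : G → X → X → Prop) (c : G → X) : Prop :=
  ∀ g, ∀ s ∈ S, R s (c g) (c (s * g))

/-- superposition of two configurations -/
noncomputable def un (o : X) (c c' : G → X) : G → X := fun g => if c g = o then c' g else c g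

/-- The abstract properties of the system that the combinatorial part uses. -/
structure Sys (o : X) (S : Finset G) (R : G → X → X → Prop)
    (nz : ℕ → (G → X) → G → Prop) : Prop where
  R0 : ∀ s, R s o o
  tr : ∀ c, PO S R c → ∀ k n g, nz n (fun x => c (x * k)) g ↔ nz n c (g * k)
  cont : ∀ c, PO S R c → ∀ n g, nz n c g →
    ∃ F : Finset G, ∀ c', PO S R c' → (∀ h ∈ F, c' h = c h) → nz n c' g
  loc : ∀ n, ∃ F : Finset G, ∀ c c', PO S R c → PO S R c' → ∀ g,
    (∀ h ∈ F, c (h * g) = c' (h * g)) → (∀ g, ¬ nz n c g) → ¬ nz n c' g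
  sep : ∀ t, ∃ F : Finset G, ∀ c c', PO S R c → PO S R c' → PO S R (un o c c') →
    (∀ g, c g ≠ o → ∀ h ∈ F, c' (h * g) = o) → (∀ g, ¬ nz t c g) →
    ∀ n, t ≤ n → ∀ g, (nz n (un o c c') g ↔ nz n c' g)
  zero : ∀ n g, ¬ nz n (fun _ => o) g
  step : ∃ F : Finset G, ∀ c, PO S R c → ∀ n g, (∀ h ∈ F, ¬ nz n c (h * g)) → ¬ nz (n+1) c g
  an : ∀ c, PO S R c → ∀ g, ∃ N, ∀ n ≥ N, ¬ nz n c g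
  baire : ∀ N : Set (G → X), N.Nonempty → (∀ c ∈ N, PO S R c) → ∀ D : Finset G,
    ∃ y ∈ N, ∃ A : Finset G, ∃ k : ℕ, ∀ c ∈ N, (∀ h ∈ A, c h = y h) →
      ∀ n ≥ k, ∀ d ∈ D, ¬ nz n c d
  restart : ∃ D : Finset G, ∀ c, PO S R c → ∀ T, ∃ z, PO S R z ∧
    (∀ g, z g ≠ o → ∃ δ ∈ D, nz T c (δ * g)) ∧ (∀ n g, nz n z g ↔ nz (n + T) c g) ∧
    ∀ u, (∀ g, c (g * u) = c g) → ∀ g, z (g * u) = z g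

/-- filling: copies of the cell `c|A` at the places `A v`, `v ∈ V`. -/
noncomputable def fill (o : X) (c : G → X) (A : Finset G) (V : Set G) : G → X := fun g =>
  if h : ∃ a ∈ A, ∃ v ∈ V, g = a * v then c (Classical.choose h) else o

/-- separation of the places. -/
def SepSet (S : Finset G) (A : Finset G) (V : Set G) : Prop :=
  ∀ a ∈ A, ∀ a' ∈ A, ∀ s ∈ insert 1 S, ∀ v ∈ V, ∀ v' ∈ V, s * a * v = a' * v' → v = v'

/-- `A` is a cell of the `U`-periodic configuration `c`. -/
structure Cell (o : X) (S : Finset G) (c : G → X) (U : Subgroup G) (A : Finset G) : Prop where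
  per : ∀ u ∈ U, ∀ g, c (g * u) = c g
  ne : ∀ a ∈ A, c a ≠ o
  supp : ∀ g, c g ≠ o → ∃ a ∈ A, ∃ u ∈ U, g = a * u
  sep : ∀ a ∈ A, ∀ a' ∈ A, ∀ s ∈ insert 1 S, ∀ u ∈ U, s * a = a' * u → u = 1

/-- periodizations of finite configurations -/
def PP (o : X) (S : Finset G) (R : G → X → X → Prop) (U : Subgroup G) (c : G → X) : Prop :=
  PO S R c ∧ ∃ A, Cell o S c U A

variable {o : X} {S : Finset G} {R : G → X → X → Prop} {nz : ℕ → (G → X) → G → Prop}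

lemma PO.shift {c : G → X} (h : PO S R c) (k : G) : PO S R (fun x => c (x * k)) := by
  intro g s hs
  have := h (g * k) s hs
  simpa [mul_assoc] using this

lemma un_PO {c c' : G → X} (hc : PO S R c) (hc' : PO S R c')
    (h : ∀ g, c g ≠ o → ∀ s ∈ S, c' (s * g) = o ∧ c' (s⁻¹ * g) = o) :
    PO S R (un o c c') := by
  intro g s hs
  have e1 := hc g s hs
  have e2 := hc' g s hs
  unfold un
  by_cases h3 : c g = o <;> by_cases h4 : c (s * g) = o
  · simpa [h3, h4] using e2
  · have := (h _ h4 s hs).2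
    rw [inv_mul_cancel_left] at this
    simp only [h3, h4, if_true, if_false, this]
    rw [h3] at e1; exact e1
  · have := (h _ h3 s hs).1
    simp only [h3, h4, if_true, if_false, this]
    rw [h4] at e1; exact e1
  · simpa [h3, h4] using e1

lemma SepSet.inj {A : Finset G} {V : Set G} (h : SepSet S A V) {a a' v v' : G} (ha : a ∈ A)
    (ha' : a' ∈ A) (hv : v ∈ V) (hv' : v' ∈ V) (e : a * v = a' * v') : v = v' ∧ a = a' := by
  have := h a ha a' ha' 1 (by simp) v hv v' hv' (by simpa using e)
  subst this
  exact ⟨rfl, by simpa using e⟩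

lemma fill_val {A : Finset G} {V : Set G} (h : SepSet S A V) (c : G → X) {a v : G} (ha : a ∈ A)
    (hv : v ∈ V) : fill o c A V (a * v) = c a := by
  have hh : ∃ a' ∈ A, ∃ v' ∈ V, a * v = a' * v' := ⟨a, ha, v, hv, rfl⟩
  unfold fill
  rw [dif_pos hh]
  obtain ⟨h1, v', h2, h3⟩ := Classical.choose_spec hh
  rw [← (h.inj ha h1 hv h2 h3).2]

lemma fill_out {A : Finset G} {V : Set G} (c : G → X) {g : G}
    (h : ¬ ∃ a ∈ A, ∃ v ∈ V, g = a * v) : fill o c A V g = o := by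
  unfold fill
  rw [dif_neg h]

lemma fill_PO (H : Sys o S R nz) {A : Finset G} {V : Set G} {U : Subgroup G} {c : G → X}
    (hc : PO S R c) (hA : Cell o S c U A) (h : SepSet S A V) : PO S R (fill o c A V) := by
  intro g s hs
  by_cases h1 : ∃ a ∈ A, ∃ v ∈ V, g = a * v <;> by_cases h2 : ∃ a ∈ A, ∃ v ∈ V, s * g = a * v
  · obtain ⟨a, ha, v, hv, rfl⟩ := h1
    obtain ⟨a', ha', v', hv', e⟩ := h2
    rw [e, fill_val h c ha hv, fill_val h c ha' hv']
    have := h a ha a' ha' s (by simp [hs]) v hv v' hv' (by rw [← e, mul_assoc])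
    subst this
    rw [← mul_assoc] at e
    rw [← mul_right_cancel e]
    exact hc a s hs
  · rw [fill_out c h2]
    obtain ⟨a, ha, v, hv, rfl⟩ := h1
    rw [fill_val h c ha hv]
    have h3 : c (s * a) = o := by
      by_contra h3
      obtain ⟨a', ha', u, hu, e⟩ := hA.supp _ h3
      have := hA.sep a ha a' ha' s (by simp [hs]) u hu e
      subst this
      exact h2 ⟨a', ha', v, hv, by rw [← mul_assoc, e, mul_one]⟩
    rw [← h3]
    exact hc a s hs
  · rw [fill_out c h1]
    obtain ⟨a, ha, v, hv, e⟩ := h2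
    rw [e, fill_val h c ha hv]
    have h3 : c (s⁻¹ * a) = o := by
      by_contra h3
      obtain ⟨a', ha', u, hu, e'⟩ := hA.supp _ h3
      have := hA.sep a' ha' a ha s (by simp [hs]) u⁻¹ (inv_mem hu)
        (by rw [eq_mul_inv_iff_mul_eq, mul_assoc, ← e']; simp)
      have : u = 1 := by simpa using this
      subst this
      refine h1 ⟨a', ha', v, hv, ?_⟩
      rw [mul_one] at e'
      rw [← e', mul_assoc, ← e]; simp
    have := hc (s⁻¹ * a) s hs
    rw [h3] at this
    simpa using this
  · rw [fill_out c h1, fill_out c h2]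
    exact H.R0 s

lemma fill_PP (H : Sys o S R nz) {A : Finset G} {U : Subgroup G} {c : G → X}
    (hc : PO S R c) (hA : Cell o S c U A) (M : Subgroup G) (Q : Finset G)
    (h : SepSet S A {v | ∃ r ∈ Q, ∃ m ∈ M, v = r * m}) :
    PP o S R M (fill o c A {v | ∃ r ∈ Q, ∃ m ∈ M, v = r * m}) := by
  set V : Set G := {v | ∃ r ∈ Q, ∃ m ∈ M, v = r * m} with hV
  have hVm : ∀ v ∈ V, ∀ m ∈ M, v * m ∈ V := by
    rintro v ⟨r, hr, m', hm', rfl⟩ m hm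
    exact ⟨r, hr, m' * m, mul_mem hm' hm, by rw [mul_assoc]⟩
  refine ⟨fill_PO H hc hA h, A.biUnion fun a => Q.image fun r : G => a * ((r : G ⧸ M).out), ?_⟩
  have hrep : ∀ r ∈ Q, ((r : G ⧸ M).out) ∈ V := by
    intro r hr
    obtain ⟨m, hm⟩ := QuotientGroup.mk_out_eq_mul M r
    exact ⟨r, hr, m, m.2, hm⟩
  constructor
  · intro u hu g
    by_cases h1 : ∃ a ∈ A, ∃ v ∈ V, g = a * v
    · obtain ⟨a, ha, v, hv, rfl⟩ := h1
      rw [mul_assoc, fill_val h c ha hv, fill_val h c ha (hVm v hv u hu)]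
    · rw [fill_out c h1, fill_out c]
      rintro ⟨a, ha, v, hv, e⟩
      exact h1 ⟨a, ha, v * u⁻¹, hVm v hv _ (inv_mem hu), by rw [← mul_assoc, ← e]; simp⟩
  · intro a' ha'
    simp only [Finset.mem_biUnion, Finset.mem_image] at ha'
    obtain ⟨a, ha, r, hr, rfl⟩ := ha'
    rw [fill_val h c ha (hrep r hr)]
    exact hA.ne a ha
  · intro g hg
    have h1 : ∃ a ∈ A, ∃ v ∈ V, g = a * v := by
      by_contra h1
      exact hg (fill_out c h1)
    obtain ⟨a, ha, v, ⟨r, hr, m, hm, rfl⟩, rfl⟩ := h1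
    obtain ⟨m', hm'⟩ := QuotientGroup.mk_out_eq_mul M r
    refine ⟨a * ((r : G ⧸ M).out), ?_, (m' : G)⁻¹ * m, mul_mem (inv_mem m'.2) hm, ?_⟩
    · simp only [Finset.mem_biUnion, Finset.mem_image]
      exact ⟨a, ha, r, hr, rfl⟩
    · rw [hm']; group
  · intro a ha a' ha' s hs u hu e
    simp only [Finset.mem_biUnion, Finset.mem_image] at ha ha'
    obtain ⟨b, hb, r, hr, rfl⟩ := ha
    obtain ⟨b', hb', r', hr', rfl⟩ := ha'
    have := h b hb b' hb' s hs _ (hrep r hr) _ (hVm _ (hrep r' hr') u hu)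
      (by rw [mul_assoc, e, mul_assoc])
    have h2 : (r : G ⧸ M) = (r' : G ⧸ M) := by
      have h3 := congrArg (fun x : G => (x : G ⧸ M)) this
      simp only [QuotientGroup.out_eq'] at h3
      rw [h3]
      rw [QuotientGroup.mk_mul_of_mem _ hu, QuotientGroup.out_eq']
    rw [h2] at this
    simpa using this

lemma PP.shift {U : Subgroup G} {c : G → X} (h : PP o S R U c) (k : G)
    (hk : k ∈ Subgroup.normalizer (U : Set G)) : PP o S R U (fun x => c (x * k)) := by
  obtain ⟨hc, A, hA⟩ := h
  have hk1 : ∀ u, u ∈ U → k * u * k⁻¹ ∈ U := fun u => (Subgroup.mem_normalizer_iff.1 hk u).1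
  have hk2 : ∀ u, u ∈ U → k⁻¹ * u * k ∈ U := fun u => (Subgroup.mem_normalizer_iff''.1 hk u).1
  refine ⟨hc.shift k, A.image (fun a => a * k⁻¹), ?_, ?_, ?_, ?_⟩
  · intro u hu g
    have := hA.per _ (hk2 u hu) (g * k)
    rw [← this]
    congr 1
    group
  · intro a ha
    obtain ⟨b, hb, rfl⟩ := Finset.mem_image.1 ha
    simpa using hA.ne b hb
  · intro g hg
    obtain ⟨a, ha, u, hu, e⟩ := hA.supp _ hg
    refine ⟨a * k⁻¹, Finset.mem_image_of_mem _ ha, k * u * k⁻¹, hk1 u hu, ?_⟩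
    rw [eq_mul_inv_of_mul_eq e]; group
  · intro a ha a' ha' s hs u hu e
    obtain ⟨b, hb, rfl⟩ := Finset.mem_image.1 ha
    obtain ⟨b', hb', rfl⟩ := Finset.mem_image.1 ha'
    have := hA.sep b hb b' hb' s hs (k⁻¹ * u * k) (hk2 u hu) (by
      rw [← mul_assoc] at e
      rw [mul_inv_eq_iff_eq_mul.1 e]; group)
    have h2 : u = k * (k⁻¹ * u * k) * k⁻¹ := by group
    rw [h2, this]; group

end abs

section abs2

open Classical Pointwise

variable {G X : Type} [Group G]
variable {o : X} {S : Finset G} {R : G → X → X → Prop} {nz : ℕ → (G → X) → G → Prop}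

/-- right saturated finite unions of cosets -/
def Nb (B : Finset G) (U : Subgroup G) : Set G := {g | ∃ b ∈ B, ∃ u ∈ U, g = b * u}

/-- nilpotency of one configuration -/
def Nilp (nz : ℕ → (G → X) → G → Prop) (c : G → X) : Prop := ∃ n, ∀ g, ¬ nz n c g

lemma Nb_mul {B : Finset G} {U : Subgroup G} {g u : G} (hg : g ∈ Nb B U) (hu : u ∈ U) :
    g * u ∈ Nb B U := by
  obtain ⟨b, hb, v, hv, rfl⟩ := hg
  exact ⟨b, hb, v * u, mul_mem hv hu, by rw [mul_assoc]⟩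

lemma Nb_left {B : Finset G} {U : Subgroup G} {g : G} (hg : g ∈ Nb B U) (F : Finset G) {h : G}
    (hh : h ∈ F) : h * g ∈ Nb (F * B) U := by
  obtain ⟨b, hb, v, hv, rfl⟩ := hg
  exact ⟨h * b, Finset.mul_mem_mul hh hb, v, hv, by rw [mul_assoc]⟩

lemma Nb_mono {B B' : Finset G} {U V : Subgroup G} (h : B ⊆ B') (h' : U ≤ V) {g : G}
    (hg : g ∈ Nb B U) : g ∈ Nb B' V := by
  obtain ⟨b, hb, v, hv, rfl⟩ := hg
  exact ⟨b, h hb, v, h' hv, rfl⟩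

lemma nil_mono (H : Sys o S R nz) {c : G → X} (hc : PO S R c) {n m : ℕ} (hn : ∀ g, ¬ nz n c g)
    (h : n ≤ m) : ∀ g, ¬ nz m c g := by
  obtain ⟨F, hF⟩ := H.step
  induction m, h using Nat.le_induction with
  | base => exact hn
  | succ m _ ih => exact fun g => hF c hc m g fun h _ => ih _

lemma nz_per (H : Sys o S R nz) {c : G → X} (hc : PO S R c) {u : G} (hu : ∀ g, c (g * u) = c g)
    (n : ℕ) (g : G) : nz n c (g * u) ↔ nz n c g := by
  rw [← H.tr c hc u n g]
  have : (fun x => c (x * u)) = c := funext hu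
  rw [this]

lemma nil_of_bdd (H : Sys o S R nz) {c : G → X} (hc : PO S R c) (U : Subgroup G)
    (hU : ∀ u ∈ U, ∀ g, c (g * u) = c g) (A : Finset G) (T : ℕ)
    (h : ∀ n ≥ T, ∀ g, nz n c g → g ∈ Nb A U) : Nilp nz c := by
  choose N hN using H.an c hc
  refine ⟨max T (A.sup N), fun g hg => ?_⟩
  obtain ⟨a, ha, u, hu, rfl⟩ := h _ (le_max_left _ _) g hg
  rw [nz_per H hc (hU u hu)] at hg
  exact hN a _ (le_trans (Finset.le_sup ha) (le_max_right _ _)) hg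

lemma loc_supp (H : Sys o S R nz) (n : ℕ) : ∃ F : Finset G, ∀ c, PO S R c → ∀ g, nz n c g →
    ∃ h ∈ F, c (h * g) ≠ o := by
  obtain ⟨F, hF⟩ := H.loc n
  refine ⟨F, fun c hc g hg => ?_⟩
  by_contra hh
  push Not at hh
  exact hF (fun _ => o) c (fun g s _ => H.R0 s) hc g (fun h hm => (hh h hm).symm) (H.zero n) hg

lemma zero_PP (H : Sys o S R nz) (U : Subgroup G) : PP o S R U (fun _ => o) :=
  ⟨fun _ s _ => H.R0 s, ∅, by simp, by simp, by simp, by simp⟩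

lemma cell_sepset {c : G → X} {U : Subgroup G} {A : Finset G} (hA : Cell o S c U A) {V : Set G}
    (hV : V ⊆ U) : SepSet S A V := by
  intro a ha a' ha' s hs v hv v' hv' e
  have := hA.sep a ha a' ha' s hs (v' * v⁻¹) (mul_mem (hV hv') (inv_mem (hV hv)))
    (by rw [← mul_assoc, ← e]; simp)
  exact (mul_inv_eq_one.1 this).symm

lemma fill_eq {c : G → X} {U : Subgroup G} {A : Finset G} (hA : Cell o S c U A) {V : Set G}
    (hV : V ⊆ U) {g : G} (h : fill o c A V g ≠ o) : fill o c A V g = c g := by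
  by_cases h1 : ∃ a ∈ A, ∃ v ∈ V, g = a * v
  · obtain ⟨a, ha, v, hv, rfl⟩ := h1
    rw [fill_val (cell_sepset hA hV) c ha hv, hA.per v (hV hv)]
  · exact absurd (fill_out c h1) h

/-- truncation -/
lemma trunc (H : Sys o S R nz) {M U : Subgroup G} (hMU : M ≤ U) {c : G → X} (hc : PP o S R U c)
    (F : Finset G) : ∃ c', PP o S R M c' ∧ (∀ h ∈ F, c' h = c h) ∧
      ∀ g, c' g ≠ o → c' g = c g := by
  obtain ⟨hc, A, hA⟩ := hc
  let Q : Finset G := (A⁻¹ * F).filter (· ∈ U)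
  have hV : {v | ∃ r ∈ Q, ∃ m ∈ M, v = r * m} ⊆ (U : Set G) := by
    rintro v ⟨r, hr, m, hm, rfl⟩
    exact mul_mem (Finset.mem_filter.1 hr).2 (hMU hm)
  refine ⟨_, fill_PP H hc hA M Q (cell_sepset hA hV), ?_, fun g hg => fill_eq hA hV hg⟩
  intro h hh
  by_cases h1 : c h = o
  · by_contra h2
    have h3 : fill o c A {v | ∃ r ∈ Q, ∃ m ∈ M, v = r * m} h ≠ o := by
      rw [h1] at h2; exact h2
    exact h2 (fill_eq hA hV h3)
  · obtain ⟨a, ha, u, hu, rfl⟩ := hA.supp h h1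
    rw [fill_val (cell_sepset hA hV) c ha, hA.per u hu]
    refine ⟨u, Finset.mem_filter.2 ⟨?_, hu⟩, 1, one_mem _, by simp⟩
    have := Finset.mul_mem_mul (Finset.inv_mem_inv ha) hh
    simpa using this

/-- a periodic configuration is periodic for subgroups of finite index -/
lemma PP_sub (H : Sys o S R nz) {V U : Subgroup G} (hVU : V ≤ U) (Q : Finset G)
    (hQ : ∀ u ∈ U, ∃ q ∈ Q, ∃ v ∈ V, u = q * v) {c : G → X} (hc : PP o S R U c) :
    PP o S R V c := by
  obtain ⟨hc, A, hA⟩ := hc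
  let Q' : Finset G := Q.filter (· ∈ U)
  have hV : {v | ∃ r ∈ Q', ∃ m ∈ V, v = r * m} ⊆ (U : Set G) := by
    rintro v ⟨r, hr, m, hm, rfl⟩
    exact mul_mem (Finset.mem_filter.1 hr).2 (hVU hm)
  have h1 := fill_PP H hc hA V Q' (cell_sepset hA hV)
  convert h1 using 1
  funext g
  by_cases h1 : c g = o
  · by_contra h2
    have h3 : fill o c A {v | ∃ r ∈ Q', ∃ m ∈ V, v = r * m} g ≠ o := by
      rw [h1] at h2; exact Ne.symm h2
    exact h2 (fill_eq hA hV h3).symm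
  · obtain ⟨a, ha, u, hu, rfl⟩ := hA.supp g h1
    rw [fill_val (cell_sepset hA hV) c ha, hA.per u hu]
    obtain ⟨q, hq, v, hv, rfl⟩ := hQ u hu
    refine ⟨q, Finset.mem_filter.2 ⟨hq, ?_⟩, v, hv, rfl⟩
    have := mul_mem hu (inv_mem (hVU hv))
    simpa using this

/-- periodization -/
lemma perz (H : Sys o S R nz) {M V : Subgroup G} (hMV : M ≤ V) {c : G → X} (hc : PO S R c)
    {A : Finset G} (hA : Cell o S c M A) (F : Finset G)
    (h1 : ∀ a ∈ A, ∀ a' ∈ A, ∀ s ∈ insert 1 S, a'⁻¹ * (s * a) ∈ V → a'⁻¹ * (s * a) ∈ M)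
    (h2 : ∀ a ∈ A, ∀ h ∈ F, a⁻¹ * h ∈ V → a⁻¹ * h ∈ M) :
    ∃ c', PP o S R V c' ∧ (∀ h ∈ F, c' h = c h) ∧ (∀ g, c' g ≠ o → g ∈ Nb A V) ∧
      ∀ a ∈ A, ∀ v ∈ V, c' (a * v) = c a := by
  have hs : SepSet S A {v | ∃ r ∈ ({1} : Finset G), ∃ m ∈ V, v = r * m} := by
    rintro a ha a' ha' s hs v ⟨r, hr, m, hm, rfl⟩ v' ⟨r', hr', m', hm', rfl⟩ e
    obtain rfl := Finset.mem_singleton.1 hr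
    obtain rfl := Finset.mem_singleton.1 hr'
    rw [one_mul, one_mul] at *
    have h3 : a'⁻¹ * (s * a) = m' * m⁻¹ := by
      rw [eq_mul_inv_iff_mul_eq, mul_assoc, e]; simp
    have h4 := h1 a ha a' ha' s hs (by rw [h3]; exact mul_mem hm' (inv_mem hm))
    have h5 := hA.sep a ha a' ha' s hs _ h4 (by simp)
    rw [h3] at h5
    exact (mul_inv_eq_one.1 h5).symm
  refine ⟨_, fill_PP H hc hA V {1} hs, ?_, ?_, ?_⟩
  · intro h hh
    by_cases h3 : ∃ a ∈ A, ∃ v ∈ V, h = a * v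
    · obtain ⟨a, ha, v, hv, rfl⟩ := h3
      rw [fill_val hs c ha ⟨1, by simp, v, hv, by simp⟩, hA.per]
      simpa using h2 a ha _ hh (by simpa using hv)
    · rw [fill_out]
      · by_contra h4
        obtain ⟨a, ha, u, hu, e⟩ := hA.supp h (Ne.symm h4)
        exact h3 ⟨a, ha, u, hMV hu, e⟩
      · rintro ⟨a, ha, v, ⟨r, hr, m, hm, rfl⟩, e⟩
        obtain rfl := Finset.mem_singleton.1 hr
        exact h3 ⟨a, ha, m, hm, by simpa using e⟩
  · intro g hg
    by_contra h3
    apply hg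
    rw [fill_out]
    rintro ⟨a, ha, v, ⟨r, hr, m, hm, rfl⟩, e⟩
    obtain rfl := Finset.mem_singleton.1 hr
    exact h3 ⟨a, ha, m, hm, by simpa using e⟩
  · intro a ha v hv
    exact fill_val hs c ha ⟨1, by simp, v, hv, by simp⟩

lemma un_ne {c c' : G → X} {g : G} (h : un o c c' g ≠ o) : c g ≠ o ∨ c' g ≠ o := by
  unfold un at h
  by_cases h1 : c g = o
  · right; simpa [h1] using h
  · exact Or.inl h1

lemma un_left {c c' : G → X} {g : G} (h : c' g = o) : un o c c' g = c g := by
  unfold un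
  split_ifs with h1
  · rw [h, h1]
  · rfl

lemma un_right {c c' : G → X} {g : G} (h : c g = o) : un o c c' g = c' g := by
  unfold un
  rw [if_pos h]

lemma un_PP {U : Subgroup G} {c c' : G → X} (hc : PP o S R U c) (hc' : PP o S R U c')
    (h : ∀ g, c g ≠ o → ∀ s ∈ insert 1 S, c' (s * g) = o ∧ c' (s⁻¹ * g) = o) :
    PP o S R U (un o c c') := by
  refine ⟨un_PO hc.1 hc'.1 fun g hg s hs => h g hg s (by simp [hs]), ?_⟩
  obtain ⟨hc, A, hA⟩ := hc
  obtain ⟨hc', A', hA'⟩ := hc'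
  have hd : ∀ g, c g ≠ o → c' g = o := fun g hg => by simpa using (h g hg 1 (by simp)).1
  have hd' : ∀ g, c' g ≠ o → c g = o := fun g hg => by
    by_contra h1; exact hg (hd g h1)
  refine ⟨A ∪ A', ?_, ?_, ?_, ?_⟩
  · intro u hu g
    unfold un
    rw [hA.per u hu, hA'.per u hu]
  · intro a ha
    rcases Finset.mem_union.1 ha with ha | ha
    · rw [un_left (hd a (hA.ne a ha))]; exact hA.ne a ha
    · rw [un_right (hd' a (hA'.ne a ha))]; exact hA'.ne a ha
  · intro g hg
    rcases un_ne hg with h1 | h1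
    · obtain ⟨a, ha, u, hu, e⟩ := hA.supp g h1
      exact ⟨a, Finset.mem_union_left _ ha, u, hu, e⟩
    · obtain ⟨a, ha, u, hu, e⟩ := hA'.supp g h1
      exact ⟨a, Finset.mem_union_right _ ha, u, hu, e⟩
  · intro a ha a' ha' s hs u hu e
    rcases Finset.mem_union.1 ha with ha | ha <;> rcases Finset.mem_union.1 ha' with ha' | ha'
    · exact hA.sep a ha a' ha' s hs u hu e
    · have h1 := (h a (hA.ne a ha) s hs).1
      rw [e, hA'.per u hu] at h1
      exact absurd h1 (hA'.ne a' ha')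
    · have h1 := (h (s * a) (by rw [e, hA.per u hu]; exact hA.ne a' ha') s hs).2
      rw [inv_mul_cancel_left] at h1
      exact absurd h1 (hA'.ne a ha)
    · exact hA'.sep a ha a' ha' s hs u hu e

/-- the set of elements that must be avoided -/
lemma avoid {U : Subgroup G} {c c' : G → X} {A E F : Finset G}
    (hc : ∀ g, c g ≠ o → g ∈ Nb A U) (hE : ∀ f ∈ F, ∀ a ∈ A, f * a ∈ E)
    (hc' : ∀ g, c' g ≠ o → g ∉ Nb E U) : ∀ g, c g ≠ o → ∀ h ∈ F, c' (h * g) = o := by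
  intro g hg h hh
  by_contra h1
  obtain ⟨a, ha, u, hu, rfl⟩ := hc g hg
  exact hc' _ h1 ⟨h * a, hE h hh a ha, u, hu, by rw [mul_assoc]⟩

lemma star (H : Sys o S R nz) (U : Subgroup G) (D : Finset G) :
    ∃ E : Finset G, ∃ N : ℕ, ∀ c, PO S R c → (∀ u ∈ U, ∀ g, c (g * u) = c g) →
      (∃ A : Finset G, ∀ g, c g ≠ o → g ∈ Nb A U) → Nilp nz c →
      (∀ g, c g ≠ o → g ∉ Nb E U) → ∀ n ≥ N, ∀ d ∈ D, ¬ nz n c d := by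
  obtain ⟨y, ⟨hy, hyU, ⟨Ay, hAy⟩, ⟨t, ht⟩⟩, A0, k, hk⟩ := H.baire
    {c | PO S R c ∧ (∀ u ∈ U, ∀ g, c (g * u) = c g) ∧
      (∃ A : Finset G, ∀ g, c g ≠ o → g ∈ Nb A U) ∧ Nilp nz c}
    ⟨fun _ => o, fun _ s _ => H.R0 s, by simp, ⟨∅, by simp⟩, 0, H.zero 0⟩
    (fun c hc => hc.1) D
  obtain ⟨F, hF⟩ := H.sep t
  let F' := F ∪ (insert 1 S ∪ S⁻¹)
  refine ⟨A0 ∪ F' * Ay, max k t, ?_⟩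
  intro c hc hcU hcf hcn hE n hn d hd hnz
  have hav := avoid (F := F') hAy (fun f hf a ha => Finset.mem_union_right A0
    (Finset.mul_mem_mul hf ha)) hE
  have hPO : PO S R (un o y c) := un_PO hy hc fun g hg s hs =>
    ⟨hav g hg s (by simp [F', hs]), hav g hg s⁻¹ (by simp [F', hs])⟩
  have hs := hF y c hy hc hPO (fun g hg h hh => hav g hg h (by simp [F', hh])) ht
  refine hk (un o y c) ⟨hPO, ?_, ?_, ?_⟩ ?_ n (le_trans (le_max_left _ _) hn) d hd
    ((hs n (le_trans (le_max_right _ _) hn) d).2 hnz)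
  · intro u hu g
    unfold un
    rw [hcU u hu, hyU u hu]
  · obtain ⟨A, hA⟩ := hcf
    refine ⟨Ay ∪ A, fun g hg => ?_⟩
    rcases un_ne hg with h1 | h1
    · exact Nb_mono Finset.subset_union_left le_rfl (hAy g h1)
    · exact Nb_mono Finset.subset_union_right le_rfl (hA g h1)
  · obtain ⟨m, hm⟩ := hcn
    refine ⟨max m t, fun g hg => ?_⟩
    rw [hs _ (le_max_right _ _)] at hg
    exact nil_mono H hc hm (le_max_left _ _) g hg
  · intro h hh
    apply un_left
    by_contra h1
    exact hE h h1 ⟨h, Finset.mem_union_left _ hh, 1, one_mem _, by simp⟩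

lemma lemC (H : Sys o S R nz) (M L K : Subgroup G) (hML : M ≤ L) (hLK : L ≤ K)
    (hKM : K ≤ Subgroup.normalizer (M : Set G)) (hKL : K ≤ Subgroup.normalizer (L : Set G))
    (BB : Set G) (hBB : ∀ g ∈ BB, ∀ k ∈ K, g * k ∈ BB) (B' : Finset G)
    (tier : ∀ c, PP o S R M c → (∀ g, c g ≠ o → g ∈ BB) → ∀ n g, nz n c g → g ∈ Nb B' K)
    (LL : Set (Subgroup G)) (hne : LL.Nonempty)
    (hLL : ∀ V ∈ LL, M ≤ V ∧ V ≤ L ∧ ∃ Q : Finset G, ∀ l ∈ L, ∃ q ∈ Q, ∃ v ∈ V, l = q * v)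
    (small : ∀ V ∈ LL, ∀ T : Finset G, ∃ V' ∈ LL, V' ≤ V ∧ ∀ t ∈ T, t ∈ V' → t ∈ M)
    (good : ∀ V ∈ LL, ∀ c, PP o S R V c → (∀ g, c g ≠ o → g ∈ BB) → Nilp nz c) (B1 : Finset G) :
    ∃ B2 : Finset G, ∀ c, PP o S R M c → (∀ g, c g ≠ o → g ∈ Nb B1 L) →
      (∀ g, c g ≠ o → g ∈ BB) → ∀ n g, nz n c g → g ∈ Nb B2 L := by
  have claim : ∀ b : G, ∃ E : Finset G, ∃ N : ℕ, ∀ c, PP o S R M c → (∀ g, c g ≠ o → g ∈ BB) →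
      (∀ g, c g ≠ o → g ∉ Nb E L) → ∀ n ≥ N, ¬ nz n c b := by
    intro b
    obtain ⟨V0, hV0⟩ := hne
    obtain ⟨y, ⟨V, hV, hyV, hyB⟩, A0, k, hk⟩ := H.baire
      {c | ∃ V ∈ LL, PP o S R V c ∧ (∀ g, c g ≠ o → g ∈ BB)}
      ⟨fun _ => o, V0, hV0, zero_PP H V0, by simp⟩ (fun c ⟨V, _, h, _⟩ => h.1) {b}
    obtain ⟨t, ht⟩ := good V hV y hyV hyB
    obtain ⟨hy, Ay, hAy⟩ := id hyV
    obtain ⟨F, hF⟩ := H.sep t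
    let F' := F ∪ (insert 1 S ∪ S⁻¹)
    refine ⟨A0 ∪ F' * Ay, max k t, ?_⟩
    intro c hc hcB hE n hn hnz
    obtain ⟨hc, A, hA⟩ := hc
    obtain ⟨Fc, hFc⟩ := H.cont c hc n b hnz
    obtain ⟨V', hV', hVV, hsm⟩ := small V hV (A⁻¹ * ((insert 1 S) * A) ∪ A⁻¹ * Fc)
    obtain ⟨c', hc', hcF, hcA, -⟩ := perz H (hLL V' hV').1 hc hA Fc
      (fun a ha a' ha' s hs h => hsm _ (Finset.mem_union_left _ (Finset.mul_mem_mul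
        (Finset.inv_mem_inv ha') (Finset.mul_mem_mul hs ha))) h)
      (fun a ha h hh h' => hsm _ (Finset.mem_union_right _ (Finset.mul_mem_mul
        (Finset.inv_mem_inv ha) hh)) h')
    have hnz' := hFc c' hc'.1 hcF
    have hc'B : ∀ g, c' g ≠ o → g ∈ BB := by
      intro g hg
      obtain ⟨a, ha, v, hv, rfl⟩ := hcA g hg
      exact hBB _ (hcB a (hA.ne a ha)) _ (hLK ((hLL V' hV').2.1 hv))
    have hE' : ∀ g, c' g ≠ o → g ∉ Nb (A0 ∪ F' * Ay) L := by
      intro g hg hg'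
      obtain ⟨a, ha, v, hv, rfl⟩ := hcA g hg
      have := Nb_mul hg' (inv_mem ((hLL V' hV').2.1 hv))
      exact hE a (hA.ne a ha) (by simpa using this)
    have hyL : ∀ g, y g ≠ o → g ∈ Nb Ay L := fun g hg =>
      Nb_mono (U := V) (subset_refl Ay) (hLL V hV).2.1 (hAy.supp g hg)
    have hav := avoid (F := F') hyL (fun f hf a ha => Finset.mem_union_right A0
      (Finset.mul_mem_mul hf ha)) hE'
    obtain ⟨Q, hQ⟩ := (hLL V' hV').2.2
    have hyV' : PP o S R V' y := PP_sub H hVV Q (fun u hu => hQ u ((hLL V hV).2.1 hu)) hyV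
    have hPP : PP o S R V' (un o y c') := un_PP hyV' hc' fun g hg s hs => by
      refine ⟨hav g hg s (by simp only [F', Finset.mem_union]; tauto), hav g hg s⁻¹ ?_⟩
      rcases Finset.mem_insert.1 hs with rfl | hs
      · simp [F']
      · simp [F', hs]
    have hs := hF y c' hy hc'.1 hPP.1 (fun g hg h hh => hav g hg h (by simp [F', hh])) ht
    refine hk (un o y c') ⟨V', hV', hPP, ?_⟩ ?_ n (le_trans (le_max_left _ _) hn) b (by simp)
      ((hs n (le_trans (le_max_right _ _) hn) b).2 hnz')
    · intro g hg
      rcases un_ne hg with h1 | h1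
      · exact hyB g h1
      · exact hc'B g h1
    · intro h hh
      apply un_left
      by_contra h1
      exact hE' h h1 ⟨h, Finset.mem_union_left _ hh, 1, one_mem _, by simp⟩
  choose E N hEN using claim
  choose F hF using fun n => loc_supp H n
  refine ⟨B' * (B'.biUnion E)⁻¹ * B1 ∪ ((Finset.range (B'.sup N)).biUnion F)⁻¹ * B1, ?_⟩
  intro c hc hcL hcB n g hg
  by_cases hn : B'.sup N ≤ n
  · obtain ⟨b, hb, k, hk, rfl⟩ := tier c hc hcB n g hg
    have h1 : nz n (fun x => c (x * k)) b := (H.tr c hc.1 k n b).2 hg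
    have h2 : ∃ g, c (g * k) ≠ o ∧ g ∈ Nb (E b) L := by
      by_contra h2
      push Not at h2
      refine hEN b _ (hc.shift k (hKM hk)) (fun g hg => ?_) h2 n
        (le_trans (Finset.le_sup hb) hn) h1
      simpa using hBB _ (hcB _ hg) _ (inv_mem hk)
    obtain ⟨g, hg1, e, he, l, hl, rfl⟩ := h2
    obtain ⟨b1, hb1, l', hl', e'⟩ := hcL _ hg1
    have hl2 := (Subgroup.mem_normalizer_iff''.1 (hKL hk) l).1 hl
    refine ⟨b * e⁻¹ * b1, Finset.mem_union_left _ (Finset.mul_mem_mul (Finset.mul_mem_mul hb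
      (Finset.inv_mem_inv (Finset.mem_biUnion.2 ⟨b, hb, he⟩))) hb1), l' * (k⁻¹ * l * k)⁻¹,
      mul_mem hl' (inv_mem hl2), ?_⟩
    have : b1 = e * l * k * l'⁻¹ := by rw [e']; group
    rw [this]; group
  · obtain ⟨h, hh, hne⟩ := hF n c hc.1 g hg
    obtain ⟨b1, hb1, l', hl', e'⟩ := hcL _ hne
    refine ⟨h⁻¹ * b1, Finset.mem_union_right _ (Finset.mul_mem_mul (Finset.inv_mem_inv
      (Finset.mem_biUnion.2 ⟨n, by simpa using hn, hh⟩)) hb1), l', hl', ?_⟩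
    rw [mul_assoc, ← e']; simp

end abs2

section abs3

open Classical Pointwise

variable {G X : Type} [Group G]
variable {o : X} {S : Finset G} {R : G → X → X → Prop} {nz : ℕ → (G → X) → G → Prop}

/-- the elements over `B` of height `i` -/
def Ht (U : Subgroup G) (s : G) (B : Finset G) (i : ℤ) : Set G :=
  {g | ∃ b ∈ B, ∃ u ∈ U, g = b * (s ^ i * u)}

lemma conj1 {U : Subgroup G} {s : G} (hs : s ∈ Subgroup.normalizer (U : Set G)) (i : ℤ) {u : G}
    (hu : u ∈ U) : s ^ i * u * (s ^ i)⁻¹ ∈ U :=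
  (Subgroup.mem_normalizer_iff.1 (zpow_mem hs i) u).1 hu

lemma conj2 {U : Subgroup G} {s : G} (hs : s ∈ Subgroup.normalizer (U : Set G)) (i : ℤ) {u : G}
    (hu : u ∈ U) : (s ^ i)⁻¹ * u * s ^ i ∈ U :=
  (Subgroup.mem_normalizer_iff''.1 (zpow_mem hs i) u).1 hu

/-- `U⟨s ^ p⟩` -/
def Vp (U : Subgroup G) (s : G) (hs : s ∈ Subgroup.normalizer (U : Set G)) (p : ℕ) :
    Subgroup G where
  carrier := {x | ∃ i : ℤ, ∃ u ∈ U, x = s ^ ((p : ℤ) * i) * u}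
  one_mem' := ⟨0, 1, one_mem _, by simp⟩
  mul_mem' := by
    rintro x y ⟨i, u, hu, rfl⟩ ⟨j, v, hv, rfl⟩
    refine ⟨i + j, ((s ^ ((p : ℤ) * j))⁻¹ * u * s ^ ((p : ℤ) * j)) * v,
      mul_mem (conj2 hs _ hu) hv, ?_⟩
    rw [mul_add, zpow_add]; group
  inv_mem' := by
    rintro x ⟨i, u, hu, rfl⟩
    refine ⟨-i, s ^ ((p : ℤ) * i) * u⁻¹ * (s ^ ((p : ℤ) * i))⁻¹, conj1 hs _ (inv_mem hu), ?_⟩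
    rw [mul_neg, zpow_neg]; group

lemma mem_Vp {U : Subgroup G} {s : G} {hs : s ∈ Subgroup.normalizer (U : Set G)} {p : ℕ} {x : G} :
    x ∈ Vp U s hs p ↔ ∃ i : ℤ, ∃ u ∈ U, x = s ^ ((p : ℤ) * i) * u := Iff.rfl

lemma Ht_zero {U : Subgroup G} {s : G} {B : Finset G} : Ht U s B 0 = Nb B U := by
  ext g
  simp [Ht, Nb]

lemma Ht_left {U : Subgroup G} {s : G} {B F : Finset G} {i : ℤ} {g h : G} (hg : g ∈ Ht U s B i)
    (hh : h ∈ F) : h * g ∈ Ht U s (F * B) i := by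
  obtain ⟨b, hb, u, hu, rfl⟩ := hg
  exact ⟨h * b, Finset.mul_mem_mul hh hb, u, hu, by rw [mul_assoc]⟩

lemma Ht_mono {U : Subgroup G} {s : G} {B B' : Finset G} {i : ℤ} {g : G} (hg : g ∈ Ht U s B i)
    (h : B ⊆ B') : g ∈ Ht U s B' i := by
  obtain ⟨b, hb, u, hu, rfl⟩ := hg
  exact ⟨b, h hb, u, hu, rfl⟩

lemma Ht_right {U : Subgroup G} {s : G} (hs : s ∈ Subgroup.normalizer (U : Set G)) {B : Finset G}
    {i : ℤ} {g : G} (hg : g ∈ Ht U s B i) (j : ℤ) : g * s ^ j ∈ Ht U s B (i + j) := by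
  obtain ⟨b, hb, u, hu, rfl⟩ := hg
  refine ⟨b, hb, (s ^ j)⁻¹ * u * s ^ j, conj2 hs j hu, ?_⟩
  rw [zpow_add]; group

lemma Ht_rightU {U : Subgroup G} {s : G} {B : Finset G}
    {i : ℤ} {g u : G} (hg : g ∈ Ht U s B i) (hu : u ∈ U) : g * u ∈ Ht U s B i := by
  obtain ⟨b, hb, v, hv, rfl⟩ := hg
  exact ⟨b, hb, v * u, mul_mem hv hu, by group⟩

lemma Ht_fin (U : Subgroup G) (s : G) (B : Finset G) (m : ℤ) : ∃ A : Finset G, ∀ g i,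
    g ∈ Ht U s B i → |i| ≤ m → g ∈ Nb A U := by
  refine ⟨B * (Finset.Icc (-m) m).image (fun i => s ^ i), ?_⟩
  rintro g i ⟨b, hb, u, hu, rfl⟩ hi
  refine ⟨b * s ^ i, Finset.mul_mem_mul hb (Finset.mem_image.2 ⟨i, ?_, rfl⟩), u, hu,
    by rw [mul_assoc]⟩
  rw [Finset.mem_Icc]; exact abs_le.1 hi

lemma bd1 {U : Subgroup G} {s : G} (hs0 : ∀ i : ℤ, s ^ i ∈ U → i = 0) (x : G) :
    ∃ r : ℕ, ∀ i : ℤ, ∀ u ∈ U, x = s ^ i * u → |i| ≤ r := by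
  by_cases h : ∃ j : ℤ, ∃ v ∈ U, x = s ^ j * v
  · obtain ⟨j, v, hv, rfl⟩ := h
    refine ⟨j.natAbs, fun i u hu e => ?_⟩
    have h1 : s ^ (i - j) = v * u⁻¹ := by
      rw [eq_mul_inv_iff_mul_eq, sub_eq_neg_add, zpow_add, mul_assoc, ← e, zpow_neg]; simp
    have h2 := hs0 (i - j) (by rw [h1]; exact mul_mem hv (inv_mem hu))
    have : i = j := by omega
    rw [this]; simp
  · exact ⟨0, fun i u hu e => absurd ⟨i, u, hu, e⟩ h⟩

lemma bd2 {U : Subgroup G} {s : G} (hs : s ∈ Subgroup.normalizer (U : Set G))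
    (hs0 : ∀ i : ℤ, s ^ i ∈ U → i = 0) (B C : Finset G) :
    ∃ r : ℕ, ∀ g i j, g ∈ Ht U s B i → g ∈ Ht U s C j → |i - j| ≤ r := by
  choose r hr using bd1 (U := U) (s := s) hs0
  refine ⟨(B⁻¹ * C).sup r, ?_⟩
  rintro g i j ⟨b, hb, u, hu, rfl⟩ ⟨c, hc, v, hv, e⟩
  have h1 := hr (b⁻¹ * c) (i - j) (s ^ j * (u * v⁻¹) * (s ^ j)⁻¹)
    (conj1 hs j (mul_mem hu (inv_mem hv))) (by
      have : c = b * (s ^ i * u) * (s ^ j * v)⁻¹ := by rw [e]; group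
      rw [this, zpow_sub]; group)
  refine le_trans h1 ?_
  exact_mod_cast Finset.le_sup (f := r) (Finset.mul_mem_mul (Finset.inv_mem_inv hb) hc)

/-- the places of the walls -/
def VI (U : Subgroup G) (s : G) (p : ℕ) (I : Set ℤ) : Set G :=
  {v | ∃ i ∈ I, ∃ u ∈ U, v = s ^ ((p : ℤ) * i) * u}

lemma fill_ht {U : Subgroup G} {s : G} {p : ℕ} {w : G → X} {A : Finset G} {I : Set ℤ} {g : G}
    (h : fill o w A (VI U s p I) g ≠ o) : ∃ i ∈ I, g ∈ Ht U s A ((p : ℤ) * i) := by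
  by_contra h1
  apply h
  apply fill_out
  rintro ⟨a, ha, v, ⟨i, hi, u, hu, rfl⟩, rfl⟩
  exact h1 ⟨i, hi, a, ha, u, hu, rfl⟩

lemma fill_I {U : Subgroup G} {s : G} {p : ℕ} {w : G → X} {A : Finset G} {I I' : Set ℤ}
    (hsep : SepSet S A (VI U s p Set.univ)) {g : G}
    (h : ∀ i, g ∈ Ht U s A ((p : ℤ) * i) → (i ∈ I ↔ i ∈ I')) :
    fill o w A (VI U s p I) g = fill o w A (VI U s p I') g := by
  have hs : ∀ I, SepSet S A (VI U s p I) := fun I a ha a' ha' s' hs' v hv v' hv' e =>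
    hsep a ha a' ha' s' hs' v (by obtain ⟨i, hi, u⟩ := hv; exact ⟨i, trivial, u⟩) v'
      (by obtain ⟨i, hi, u⟩ := hv'; exact ⟨i, trivial, u⟩) e
  by_cases h1 : ∃ a ∈ A, ∃ v ∈ VI U s p I, g = a * v
  · obtain ⟨a, ha, v, ⟨i, hi, u, hu, rfl⟩, rfl⟩ := h1
    rw [fill_val (hs I) w ha ⟨i, hi, u, hu, rfl⟩, fill_val (hs I') w ha
      ⟨i, (h i ⟨a, ha, u, hu, rfl⟩).1 hi, u, hu, rfl⟩]
  · rw [fill_out w h1, fill_out w]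
    rintro ⟨a, ha, v, ⟨i, hi, u, hu, rfl⟩, rfl⟩
    exact h1 ⟨a, ha, _, ⟨i, (h i ⟨a, ha, u, hu, rfl⟩).2 hi, u, hu, rfl⟩, rfl⟩

lemma un_per {U : Subgroup G} {c c' : G → X} (h : ∀ u ∈ U, ∀ g, c (g * u) = c g)
    (h' : ∀ u ∈ U, ∀ g, c' (g * u) = c' g) : ∀ u ∈ U, ∀ g, un o c c' (g * u) = un o c c' g := by
  intro u hu g
  unfold un
  rw [h u hu, h' u hu]

lemma VI_finset (U : Subgroup G) (s : G) (p : ℕ) (I : Finset ℤ) :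
    VI U s p I = {v | ∃ r ∈ I.image (fun i : ℤ => s ^ ((p : ℤ) * i)), ∃ m ∈ U, v = r * m} := by
  ext v
  constructor
  · rintro ⟨i, hi, u, hu, rfl⟩
    exact ⟨_, Finset.mem_image.2 ⟨i, hi, rfl⟩, u, hu, rfl⟩
  · rintro ⟨r, hr, u, hu, rfl⟩
    obtain ⟨i, hi, rfl⟩ := Finset.mem_image.1 hr
    exact ⟨i, hi, u, hu, rfl⟩

lemma fill_per {U : Subgroup G} {s : G} {p : ℕ} {w : G → X} {A : Finset G} {I : Set ℤ}
    (hs : SepSet S A (VI U s p I)) :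
    ∀ u ∈ U, ∀ g, fill o w A (VI U s p I) (g * u) = fill o w A (VI U s p I) g := by
  intro u hu g
  by_cases h1 : ∃ a ∈ A, ∃ v ∈ VI U s p I, g = a * v
  · obtain ⟨a, ha, v, ⟨i, hi, v, hv, rfl⟩, rfl⟩ := h1
    rw [fill_val hs w ha ⟨i, hi, v, hv, rfl⟩, mul_assoc,
      fill_val hs w ha ⟨i, hi, v * u, mul_mem hv hu, by rw [mul_assoc]⟩]
  · rw [fill_out w h1, fill_out w]
    rintro ⟨a, ha, v, ⟨i, hi, v, hv, rfl⟩, e⟩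
    refine h1 ⟨a, ha, _, ⟨i, hi, v * u⁻¹, mul_mem hv (inv_mem hu), rfl⟩, ?_⟩
    rw [eq_mul_inv_of_mul_eq e]; group

/-- data of the walls -/
lemma wall_data (H : Sys o S R nz) (U : Subgroup G) (s : G)
    (hs : s ∈ Subgroup.normalizer (U : Set G)) (hs0 : ∀ i : ℤ, s ^ i ∈ U → i = 0) {w : G → X}
    {A : Finset G} (hw : PO S R w) (hA : Cell o S w U A) (A0 : Finset G) :
    ∃ p : ℕ, 1 ≤ p ∧ SepSet S A (VI U s p Set.univ) ∧
      (∀ I : Set ℤ, ∀ i ∈ I, ∀ h ∈ A0, fill o w A (VI U s p I) (h * s ^ ((p : ℤ) * i)) = w h) ∧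
      (∀ I : Set ℤ, PO S R (fill o w A (VI U s p I))) ∧
      (∀ I : Finset ℤ, PP o S R U (fill o w A (VI U s p I))) ∧
      PP o S R (Vp U s hs p) (fill o w A (VI U s p Set.univ)) := by
  obtain ⟨r, hr⟩ := bd2 hs hs0 (A0 ∪ (insert 1 S) * A) A
  have key : ∀ g i j, g ∈ Ht U s (A0 ∪ (insert 1 S) * A) (((r + 1 : ℕ) : ℤ) * i) →
      g ∈ Ht U s A (((r + 1 : ℕ) : ℤ) * j) → i = j := by
    intro g i j h1 h2
    have h3 := hr g _ _ h1 h2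
    rw [← mul_sub, abs_mul] at h3
    by_contra h4
    have h5 : 1 ≤ |i - j| := Int.one_le_abs (sub_ne_zero.2 h4)
    rw [abs_of_nonneg (by positivity)] at h3
    push_cast at h3
    nlinarith
  set p := r + 1 with hp
  have hsep : SepSet S A (VI U s p Set.univ) := by
    rintro a ha a' ha' s' hs' v ⟨i, -, u, hu, rfl⟩ v' ⟨j, -, u', hu', rfl⟩ e
    have h1 := key (a' * (s ^ ((p : ℤ) * j) * u')) i j ⟨s' * a, Finset.mem_union_right _
      (Finset.mul_mem_mul hs' ha), u, hu, e.symm⟩ ⟨a', ha', u', hu', rfl⟩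
    subst h1
    have h2 := hA.sep a ha a' ha' s' hs' (s ^ ((p : ℤ) * i) * (u' * u⁻¹) * (s ^ ((p : ℤ) * i))⁻¹)
      (conj1 hs _ (mul_mem hu' (inv_mem hu))) (by
        have h3 : a' = s' * a * (s ^ ((p : ℤ) * i) * u) * (s ^ ((p : ℤ) * i) * u')⁻¹ := by
          rw [e]; group
        rw [h3]; group)
    have h4 : u' * u⁻¹ = 1 := by
      have := congrArg (fun x => (s ^ ((p : ℤ) * i))⁻¹ * x * s ^ ((p : ℤ) * i)) h2
      simpa [mul_assoc] using this
    rw [mul_inv_eq_one.1 h4]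
  have hsI : ∀ I, SepSet S A (VI U s p I) := fun I a ha a' ha' s' hs' v hv v' hv' e =>
    hsep a ha a' ha' s' hs' v (by obtain ⟨i, hi, u⟩ := hv; exact ⟨i, trivial, u⟩) v'
      (by obtain ⟨i, hi, u⟩ := hv'; exact ⟨i, trivial, u⟩) e
  refine ⟨p, by omega, hsep, ?_, fun I => fill_PO H hw hA (hsI I), ?_, ?_⟩
  · intro I i hi h hh
    by_cases h1 : ∃ a ∈ A, ∃ v ∈ VI U s p I, h * s ^ ((p : ℤ) * i) = a * v
    · obtain ⟨a, ha, v, ⟨j, hj, u, hu, rfl⟩, e⟩ := h1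
      have h2 := key (a * (s ^ ((p : ℤ) * j) * u)) i j ⟨h, Finset.mem_union_left _ hh, 1,
        one_mem _, by rw [mul_one, e]⟩ ⟨a, ha, u, hu, rfl⟩
      subst h2
      rw [e, fill_val (hsI I) w ha ⟨i, hi, u, hu, rfl⟩, eq_mul_inv_of_mul_eq e]
      have := hA.per _ (conj1 hs ((p : ℤ) * i) hu) a
      rw [← this]; congr 1; group
    · rw [fill_out w h1]
      by_contra h2
      obtain ⟨a, ha, u, hu, rfl⟩ := hA.supp h (Ne.symm h2)
      exact h1 ⟨a, ha, _, ⟨i, hi, _, conj2 hs ((p : ℤ) * i) hu, rfl⟩, by group⟩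
  · intro I
    have := hsI I
    rw [VI_finset] at this ⊢
    exact fill_PP H hw hA U _ this
  · have h1 : VI U s p Set.univ = {v | ∃ r ∈ ({1} : Finset G), ∃ m ∈ Vp U s hs p, v = r * m} := by
      ext v
      constructor
      · rintro ⟨i, -, u, hu, rfl⟩
        exact ⟨1, by simp, _, mem_Vp.2 ⟨i, u, hu, rfl⟩, by simp⟩
      · rintro ⟨r, hr, m, ⟨i, u, hu, rfl⟩, rfl⟩
        obtain rfl := Finset.mem_singleton.1 hr
        exact ⟨i, trivial, u, hu, by simp⟩
    rw [h1] at hsep ⊢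
    exact fill_PP H hw hA _ _ hsep

end abs3

section abs4

open Classical Pointwise

variable {G X : Type} [Group G]
variable {o : X} {S : Finset G} {R : G → X → X → Prop} {nz : ℕ → (G → X) → G → Prop}

lemma walls (H : Sys o S R nz) (U : Subgroup G) (s : G)
    (hs : s ∈ Subgroup.normalizer (U : Set G)) (hs0 : ∀ i : ℤ, s ^ i ∈ U → i = 0)
    (BB : Set G) (hBB : ∀ g ∈ BB, ∀ i : ℤ, ∀ u ∈ U, g * (s ^ i * u) ∈ BB) (B' : Finset G)
    (tier : ∀ c, PP o S R U c → (∀ g, c g ≠ o → g ∈ BB) → ∀ n g, nz n c g →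
      ∃ i, g ∈ Ht U s B' i)
    (good : ∀ p ≥ 1, ∀ c, PP o S R (Vp U s hs p) c → (∀ g, c g ≠ o → g ∈ BB) → Nilp nz c)
    (c : G → X) (hcP : PP o S R U c) (hcB : ∀ g, c g ≠ o → g ∈ BB) : Nilp nz c := by
  obtain ⟨F1, hF1⟩ := H.step
  obtain ⟨r1, hr1⟩ := bd2 hs hs0 (F1 * B') B'
  -- the generic wall configuration
  obtain ⟨w, ⟨hwP, hwB⟩, A0, N0, hN0⟩ := H.baire
    {c | PP o S R U c ∧ (∀ g, c g ≠ o → g ∈ BB)}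
    ⟨fun _ => o, zero_PP H U, by simp⟩ (fun c h => h.1.1)
    (B' * (Finset.Icc (-(r1 : ℤ)) r1).image (fun i => s ^ i))
  obtain ⟨hw, Aw, hAw⟩ := id hwP
  obtain ⟨hc, Ac, hAc⟩ := id hcP
  have hAc0 : ∀ g, c g ≠ o → g ∈ Ht U s Ac 0 := by
    intro g hg
    rw [Ht_zero]; exact hAc.supp g hg
  -- a wall forces zeros around it
  have wall : ∀ x, PP o S R U x → (∀ g, x g ≠ o → g ∈ BB) → ∀ j : ℤ,
      (∀ h ∈ A0, x (h * s ^ j) = w h) → ∀ n ≥ N0, ∀ g i, g ∈ Ht U s B' i → |i - j| ≤ r1 →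
      ¬ nz n x g := by
    rintro x hx hxB j hj n hn g i ⟨b, hb, u, hu, rfl⟩ hij hnz
    have h1 := hN0 (fun g => x (g * s ^ j)) ⟨hx.shift _ (zpow_mem hs j), fun g hg => by
        simpa [mul_assoc] using hBB _ (hxB _ hg) (-j) 1 (one_mem _)⟩ hj n hn (b * s ^ (i - j))
      (Finset.mul_mem_mul hb (Finset.mem_image.2 ⟨i - j, Finset.mem_Icc.2 (abs_le.1 hij), rfl⟩))
    rw [H.tr x hx.1] at h1
    apply h1
    obtain ⟨A, hA⟩ := hx.2
    rw [← mul_assoc, nz_per H hx.1 (hA.per u hu)] at hnz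
    rw [mul_assoc, ← zpow_add]
    simpa using hnz
  obtain ⟨p, hp1, hsep, hA0, hPOI, hPPI, hW⟩ := wall_data H U s hs hs0 hw hAw A0
  set W : Set ℤ → G → X := fun I => fill o w Aw (VI U s p I) with hWdef
  have hWB : ∀ I, ∀ g, W I g ≠ o → g ∈ BB := by
    intro I g hg
    obtain ⟨i, hi, a, ha, u, hu, rfl⟩ := fill_ht hg
    exact hBB _ (hwB a (hAw.ne a ha)) _ _ hu
  have hWper : ∀ I, ∀ u ∈ U, ∀ g, W I (g * u) = W I g := fun I =>
    fill_per (S := S) fun a ha a' ha' s' hs' v hv v' hv' e =>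
      hsep a ha a' ha' s' hs' v (by obtain ⟨i, hi, u⟩ := hv; exact ⟨i, trivial, u⟩) v'
        (by obtain ⟨i, hi, u⟩ := hv'; exact ⟨i, trivial, u⟩) e
  have hpi : ∀ i : ℤ, |i| ≤ |(p : ℤ) * i| := by
    intro i
    rw [abs_mul, abs_of_nonneg (by positivity : (0 : ℤ) ≤ p)]
    have : (1 : ℤ) ≤ p := by exact_mod_cast hp1
    nlinarith [abs_nonneg i]
  obtain ⟨T, hNT, hT⟩ : ∃ T ≥ N0, ∀ g, ¬ nz T (W Set.univ) g := by
    obtain ⟨t, ht⟩ := good p hp1 _ hW (hWB _)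
    exact ⟨max N0 t, le_max_left _ _, nil_mono H hW.1 ht (le_max_right _ _)⟩
  -- separation of c from the walls
  obtain ⟨ra, hra⟩ := bd2 hs hs0 Ac A0
  obtain ⟨rb, hrb⟩ := bd2 hs hs0 ((insert 1 S ∪ (insert 1 S)⁻¹) * Ac) Aw
  have hdisj : ∀ k : ℕ, rb ≤ k → ∀ I : Set ℤ, (∀ i ∈ I, (k : ℤ) < |i|) → ∀ g, c g ≠ o →
      ∀ t ∈ insert 1 S ∪ (insert 1 S)⁻¹, W I (t * g) = o := by
    intro k hk I hI g hg t ht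
    by_contra h1
    obtain ⟨i, hi, h2⟩ := fill_ht h1
    have h3 := hrb _ _ _ (Ht_left (hAc0 g hg) ht) h2
    rw [zero_sub, abs_neg] at h3
    have := hpi i
    have := hI i hi
    have : (rb : ℤ) ≤ k := by exact_mod_cast hk
    omega
  have hunI : ∀ k : ℕ, rb ≤ k → ∀ I : Set ℤ, (∀ i ∈ I, (k : ℤ) < |i|) →
      PO S R (un o c (W I)) := fun k hk I hI => un_PO hc (hPOI I) fun g hg t ht =>
    ⟨hdisj k hk I hI g hg t (by simp [ht]), hdisj k hk I hI g hg t⁻¹ (by simp [ht])⟩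
  have hunP : ∀ k : ℕ, rb ≤ k → ∀ I : Finset ℤ, (∀ i ∈ I, (k : ℤ) < |i|) →
      PP o S R U (un o c (W I)) := fun k hk I hI => un_PP hcP (hPPI I) fun g hg t ht =>
    ⟨hdisj k hk I hI g hg t (Finset.mem_union_left _ ht),
      hdisj k hk I hI g hg t⁻¹ (Finset.mem_union_right _ (Finset.inv_mem_inv ht))⟩
  have hunB : ∀ I, ∀ g, un o c (W I) g ≠ o → g ∈ BB := by
    intro I g hg
    rcases un_ne hg with h | h
    · exact hcB g h
    · exact hWB I g h
  let IK : ℕ → Set ℤ := fun k => {i | (k : ℤ) < |i|}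
  let IKM : ℕ → ℕ → Finset ℤ := fun k m => (Finset.Icc (-(m : ℤ)) m).filter (fun i => (k : ℤ) < |i|)
  have hIKM : ∀ k m, ∀ i ∈ IKM k m, (k : ℤ) < |i| := fun k m i hi => (Finset.mem_filter.1 hi).2
  let ck : ℕ → G → X := fun k => un o c (W (IK k))
  have hckPO : ∀ k, rb ≤ k → PO S R (ck k) := fun k hk => hunI k hk _ fun i hi => hi
  have hckper : ∀ k, ∀ u ∈ U, ∀ g, ck k (g * u) = ck k g := fun k => un_per hAc.per (hWper _)
  -- approximation
  have appr : ∀ k, rb ≤ k → ∀ n g, nz n (ck k) g → ∀ m0 : ℕ, ∃ m ≥ m0,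
      nz n (un o c (W (IKM k m))) g := by
    intro k hk n g hg m0
    obtain ⟨F, hF⟩ := H.cont _ (hckPO k hk) n g hg
    obtain ⟨r, hr⟩ := bd2 hs hs0 F Aw
    refine ⟨max m0 r, le_max_left _ _, hF _ (hunP k hk _ (hIKM k _)).1 fun h hh => ?_⟩
    have : W (IKM k (max m0 r)) h = W (IK k) h := by
      apply fill_I hsep
      intro i hi
      have h3 := hr h 0 _ ⟨h, hh, 1, one_mem _, by simp⟩ hi
      rw [zero_sub, abs_neg] at h3
      have h4 := hpi i
      have h5 : |i| ≤ ((max m0 r : ℕ) : ℤ) := by push_cast; exact le_max_of_le_right (by omega)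
      simp only [IKM, IK, Finset.coe_filter, Set.mem_ofPred_eq, Finset.mem_Icc]
      constructor
      · exact fun h => h.2
      · exact fun h => ⟨abs_le.1 h5, h⟩
    show un o c _ h = un o c _ h
    unfold un
    rw [this]
  have tierK : ∀ k, rb ≤ k → ∀ n g, nz n (ck k) g → ∃ i, g ∈ Ht U s B' i := by
    intro k hk n g hg
    obtain ⟨m, -, h⟩ := appr k hk n g hg 0
    exact tier _ (hunP k hk _ (hIKM k m)) (hunB _) n g h
  have wallK : ∀ k, rb ≤ k → ra ≤ k → ∀ i : ℤ, (k : ℤ) < |i| → ∀ n ≥ N0, ∀ g j,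
      g ∈ Ht U s B' j → |j - (p : ℤ) * i| ≤ r1 → ¬ nz n (ck k) g := by
    intro k hk hk' i hi n hn g j hgj hj hnz
    obtain ⟨m, hm, h⟩ := appr k hk n g hnz i.natAbs
    refine wall _ (hunP k hk _ (hIKM k m)) (hunB _) ((p : ℤ) * i) ?_ n hn g j hgj hj h
    intro h hh
    rw [un_right]
    · refine hA0 _ i ?_ h hh
      simp only [IKM, Finset.coe_filter, Set.mem_ofPred_eq, Finset.mem_Icc]
      omega
    · by_contra h1
      have h2 := hra _ 0 ((p : ℤ) * i) (hAc0 _ h1)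
        ⟨h, hh, 1, one_mem _, by simp⟩
      rw [zero_sub, abs_neg] at h2
      have := hpi i
      omega
  -- everything dies outside a bounded region
  obtain ⟨FT, hFT⟩ := H.loc T
  obtain ⟨rc, hrc⟩ := bd2 hs hs0 (FT * B') (Ac ∪ Aw)
  have far : ∀ k, rb ≤ k → ∀ g j, g ∈ Ht U s B' j → (p : ℤ) * k + rc < |j| →
      ¬ nz T (ck k) g := by
    intro k hk g j hgj hj
    refine hFT _ _ hW.1 (hckPO k hk) g (fun h hh => ?_) hT
    have hc0 : c (h * g) = o := by
      by_contra h1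
      have h2 := hrc _ _ _ (Ht_left hgj hh) (Ht_mono (hAc0 _ h1) Finset.subset_union_left)
      rw [sub_zero] at h2
      have : 0 ≤ (p : ℤ) * k := by positivity
      omega
    show _ = un o c _ _
    rw [un_right hc0]
    apply fill_I hsep
    intro i hi
    refine ⟨fun _ => ?_, fun _ => trivial⟩
    have h2 := hrc _ _ _ (Ht_left hgj hh) (Ht_mono hi Finset.subset_union_right)
    show (k : ℤ) < |i|
    by_contra h3
    have h4 : |(p : ℤ) * i| ≤ (p : ℤ) * k := by
      rw [abs_mul, abs_of_nonneg (by positivity : (0 : ℤ) ≤ p)]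
      exact mul_le_mul_of_nonneg_left (not_lt.1 h3) (by positivity)
    have h5 := abs_sub_abs_le_abs_sub j ((p : ℤ) * i)
    omega
  have bdd : ∀ k, rb ≤ k → ra ≤ k → ∃ J : ℤ, ∀ n ≥ T, ∀ g j, g ∈ Ht U s B' j → J ≤ |j| →
      ¬ nz n (ck k) g := by
    intro k hk hk'
    have hp1' : (1 : ℤ) ≤ p := by exact_mod_cast hp1
    obtain ⟨J, hJ⟩ : ∃ J : ℤ, J = (p : ℤ) * (k + rc + 1) := ⟨_, rfl⟩
    have hJ1 : (p : ℤ) * k + rc < J := by nlinarith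
    have hJ0 : 0 ≤ J := by rw [hJ]; positivity
    refine ⟨J, fun n hn => ?_⟩
    induction n, hn using Nat.le_induction with
    | base => exact fun g j hgj hj => far k hk g j hgj (by omega)
    | succ n hn ih =>
      intro g j hgj hj hnz
      by_cases h1 : |j| ≤ J + r1
      · rcases le_total 0 j with h0 | h0
        · refine wallK k hk hk' (k + rc + 1) ?_ (n + 1) (by omega) g j hgj ?_ hnz
          · rw [abs_of_nonneg (by positivity)]; omega
          · rw [← hJ]; rw [abs_of_nonneg h0] at hj h1; rw [abs_le]; omega
        · refine wallK k hk hk' (-(k + rc + 1)) ?_ (n + 1) (by omega) g j hgj ?_ hnz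
          · rw [abs_neg, abs_of_nonneg (by positivity)]; omega
          · rw [mul_neg, ← hJ]; rw [abs_of_nonpos h0] at hj h1; rw [abs_le]; omega
      · refine hF1 _ (hckPO k hk) n g (fun h hh hnz' => ?_) hnz
        obtain ⟨j', hj'⟩ := tierK k hk n _ hnz'
        have h2 := hr1 _ _ _ (Ht_left hgj hh) hj'
        refine ih _ j' hj' ?_ hnz'
        have h5 := abs_sub_abs_le_abs_sub j j'
        omega
  -- restart
  obtain ⟨Dr, hDr⟩ := H.restart
  obtain ⟨Es, Ns, hstar⟩ := star H U B'
  obtain ⟨FS, hFS⟩ := loc_supp H T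
  obtain ⟨rd, hrd⟩ := bd2 hs hs0 (FS * (Dr * Es)) (Ac ∪ Aw)
  have main : ∀ k, rb ≤ k → ra ≤ k → ∀ n ≥ T + Ns, ∀ g i, g ∈ Ht U s B' i → nz n (ck k) g →
      |i| ≤ rd ∨ (k : ℤ) - rd ≤ |i| := by
    intro k hk hk' n hn g i hgi hnz
    obtain ⟨J, hJ⟩ := bdd k hk hk'
    obtain ⟨z, hz, hzs, hznz, hzU⟩ := hDr _ (hckPO k hk) T
    have hzper : ∀ u ∈ U, ∀ g, z (g * u) = z g := fun u hu => hzU u (hckper k u hu)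
    have hnb : ∀ n ≥ T, ∀ g, nz n (ck k) g → ∃ j, g ∈ Ht U s B' j ∧ |j| ≤ J := by
      intro n hn g hg
      obtain ⟨j, hj⟩ := tierK k hk n g hg
      refine ⟨j, hj, ?_⟩
      by_contra h1
      exact hJ n hn g j hj (by omega) hg
    obtain ⟨AJ, hAJ⟩ := Ht_fin U s B' J
    have hznil : Nilp nz z := by
      refine nil_of_bdd H hz U hzper AJ 0 fun n _ g hg => ?_
      obtain ⟨j, hj, hj'⟩ := hnb _ (by omega) g ((hznz n g).1 hg)
      exact hAJ g j hj hj'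
    have hzfin : ∀ g, z g ≠ o → g ∈ Nb (Dr⁻¹ * AJ) U := by
      intro g hg
      obtain ⟨d, hd, hd'⟩ := hzs g hg
      obtain ⟨j, hj, hj'⟩ := hnb _ le_rfl _ hd'
      simpa using Nb_left (hAJ _ j hj hj') Dr⁻¹ (Finset.inv_mem_inv hd)
    have hnz' : nz (n - T) z g := (hznz _ g).2 (by
      have : n - T + T = n := by omega
      rwa [this])
    obtain ⟨b, hb, u, hu, rfl⟩ := hgi
    rw [← mul_assoc, nz_per H hz (hzper u hu), ← H.tr z hz] at hnz'
    have h1 : ∃ g, z (g * s ^ i) ≠ o ∧ g ∈ Nb Es U := by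
      by_contra h1
      push Not at h1
      refine hstar (fun x => z (x * s ^ i)) (hz.shift _) ?_ ?_ ?_ h1 (n - T) (by omega) b hb hnz'
      · intro u hu g
        show z (g * u * s ^ i) = z (g * s ^ i)
        have := hzper _ (conj2 hs i hu) (g * s ^ i)
        rw [← this]; congr 1; group
      · obtain ⟨A, hA⟩ := Ht_fin U s (Dr⁻¹ * AJ) |(-i)|
        refine ⟨A, fun g hg => hA g (0 + -i) ?_ (by simp)⟩
        have := hzfin _ hg
        rw [← Ht_zero (s := s)] at this
        simpa using Ht_right hs this (-i)
      · obtain ⟨m, hm⟩ := hznil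
        exact ⟨m, fun g => by rw [H.tr z hz]; exact hm _⟩
    obtain ⟨g, hg, hgE⟩ := h1
    obtain ⟨d, hd, hd'⟩ := hzs _ hg
    obtain ⟨h, hh, hh'⟩ := hFS _ (hckPO k hk) _ hd'
    rw [← Ht_zero (s := s)] at hgE
    have h2 := Ht_left (Ht_left (Ht_right hs hgE i) hd) hh
    rw [zero_add] at h2
    rcases un_ne hh' with h3 | h3
    · left
      have := hrd _ _ _ h2 (Ht_mono (hAc0 _ h3) Finset.subset_union_left)
      simpa using this
    · right
      obtain ⟨j, hj, hj'⟩ := fill_ht h3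
      have h4 := hrd _ _ _ h2 (Ht_mono hj' Finset.subset_union_right)
      have h5 := hpi j
      have h6 := abs_sub_abs_le_abs_sub ((p : ℤ) * j) i
      rw [abs_sub_comm] at h6
      have h7 : (k : ℤ) < |j| := hj
      omega
  obtain ⟨A, hA⟩ := Ht_fin U s B' rd
  refine nil_of_bdd H hc U hAc.per A (T + Ns) fun n hn g hg => ?_
  obtain ⟨i, hi⟩ := tier c hcP hcB n g hg
  refine hA g i hi ?_
  obtain ⟨F, hF⟩ := H.cont c hc n g hg
  obtain ⟨r, hr⟩ := bd2 hs hs0 F Aw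
  obtain ⟨k, hk⟩ : ∃ k : ℕ, k = rb + ra + r + rd + i.natAbs + 1 := ⟨_, rfl⟩
  have hnz : nz n (ck k) g := by
    refine hF _ (hckPO k (by omega)) fun h hh => un_left ?_
    by_contra h1
    obtain ⟨j, hj, hj'⟩ := fill_ht h1
    have h3 := hr h 0 _ ⟨h, hh, 1, one_mem _, by simp⟩ hj'
    rw [zero_sub, abs_neg] at h3
    have := hpi j
    have h7 : (k : ℤ) < |j| := hj
    omega
  rcases main k (by omega) (by omega) n hn g i hi hnz with h | h
  · exact h
  · have := Int.abs_eq_natAbs i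
    omega

end abs4

section abs5

open Classical Pointwise

variable {G X : Type} [Group G]
variable {o : X} {S : Finset G} {R : G → X → X → Prop} {nz : ℕ → (G → X) → G → Prop}

lemma norm_of_comm {M Q V : Subgroup G} (hQM : ∀ x ∈ Q, ∀ y ∈ Q, x * y * x⁻¹ * y⁻¹ ∈ M)
    (hMV : M ≤ V) (hVQ : V ≤ Q) : Q ≤ Subgroup.normalizer (V : Set G) := by
  intro q hq
  have key : ∀ q ∈ Q, ∀ v ∈ V, q * v * q⁻¹ ∈ V := by
    intro q hq v hv
    have := mul_mem (hMV (hQM q hq v (hVQ hv))) hv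
    simpa using this
  rw [Subgroup.mem_normalizer_iff]
  intro v
  refine ⟨key q hq v, fun h => ?_⟩
  have := key q⁻¹ (inv_mem hq) _ h
  simpa [mul_assoc] using this

lemma U_le_Vp {U : Subgroup G} {s : G} (hs : s ∈ Subgroup.normalizer (U : Set G)) (p : ℕ) :
    U ≤ Vp U s hs p := fun u hu => ⟨0, u, hu, by simp⟩

lemma Vp_dvd {U : Subgroup G} {s : G} (hs : s ∈ Subgroup.normalizer (U : Set G)) {p q : ℕ}
    (h : p ∣ q) : Vp U s hs q ≤ Vp U s hs p := by
  rintro x ⟨i, u, hu, rfl⟩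
  obtain ⟨r, rfl⟩ := h
  exact ⟨r * i, u, hu, by push_cast; rw [mul_assoc]⟩

lemma Vp_le {U Q : Subgroup G} {s : G} (hs : s ∈ Subgroup.normalizer (U : Set G)) (hUQ : U ≤ Q)
    (hsQ : s ∈ Q) (p : ℕ) : Vp U s hs p ≤ Q := by
  rintro x ⟨i, u, hu, rfl⟩
  exact mul_mem (zpow_mem hsQ _) (hUQ hu)

lemma Vp_fin {U : Subgroup G} {s : G} (hs : s ∈ Subgroup.normalizer (U : Set G)) {p : ℕ}
    (hp : 1 ≤ p) : ∃ F : Finset G, ∀ l ∈ Vp U s hs 1, ∃ q ∈ F, ∃ v ∈ Vp U s hs p, l = q * v := by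
  refine ⟨(Finset.range p).image (fun i => s ^ i), ?_⟩
  rintro x ⟨i, u, hu, rfl⟩
  have hp' : (0 : ℤ) < p := by exact_mod_cast hp
  have h0 := Int.emod_nonneg i hp'.ne'
  have h1 := Int.emod_lt_of_pos i hp'
  refine ⟨s ^ (i % p).toNat, Finset.mem_image.2 ⟨_, Finset.mem_range.2 (by omega), rfl⟩,
    s ^ ((p : ℤ) * (i / p)) * u, ⟨_, u, hu, rfl⟩, ?_⟩
  rw [← zpow_natCast, Int.toNat_of_nonneg h0, ← mul_assoc, ← zpow_add, Int.emod_add_mul_ediv]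
  simp

/-- tier transfer -/
lemma tier_up (H : Sys o S R nz) {M U : Subgroup G} (hMU : M ≤ U) {BB C : Set G}
    (tier : ∀ c, PP o S R M c → (∀ g, c g ≠ o → g ∈ BB) → ∀ n g, nz n c g → g ∈ C) :
    ∀ c, PP o S R U c → (∀ g, c g ≠ o → g ∈ BB) → ∀ n g, nz n c g → g ∈ C := by
  intro c hc hB n g hg
  obtain ⟨F, hF⟩ := H.cont c hc.1 n g hg
  obtain ⟨c', hc', hcF, hcc⟩ := trunc H hMU hc F
  refine tier c' hc' (fun g hg => hB g ?_) n g (hF c' hc'.1 hcF)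
  rw [← hcc g hg]; exact hg

lemma stepZ (H : Sys o S R nz) {M Q U : Subgroup G} (hMU : M ≤ U) (hUQ : U ≤ Q)
    (hQM : ∀ x ∈ Q, ∀ y ∈ Q, x * y * x⁻¹ * y⁻¹ ∈ M) (B B' : Finset G)
    (tier : ∀ c, PP o S R M c → (∀ g, c g ≠ o → g ∈ Nb B Q) → ∀ n g, nz n c g → g ∈ Nb B' Q)
    {s : G} (hsQ : s ∈ Q) (hs : s ∈ Subgroup.normalizer (U : Set G))
    (good : ∀ p ≥ 1, ∀ c, PP o S R (Vp U s hs p) c → (∀ g, c g ≠ o → g ∈ Nb B Q) → Nilp nz c) :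
    ∀ c, PP o S R U c → (∀ g, c g ≠ o → g ∈ Nb B Q) → Nilp nz c := by
  by_cases h0 : ∃ p : ℕ, 1 ≤ p ∧ s ^ p ∈ U
  · obtain ⟨p, hp, hpU⟩ := h0
    have : Vp U s hs p = U := by
      apply le_antisymm _ (U_le_Vp hs p)
      rintro x ⟨i, u, hu, rfl⟩
      rw [zpow_mul, zpow_natCast]
      exact mul_mem (zpow_mem hpU _) hu
    have h1 := good p hp
    rwa [this] at h1
  · have hs0 : ∀ i : ℤ, s ^ i ∈ U → i = 0 := by
      intro i hi
      by_contra h1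
      refine h0 ⟨i.natAbs, by omega, ?_⟩
      rcases Int.natAbs_eq i with h | h
      · rw [h, zpow_natCast] at hi; exact hi
      · rw [h, zpow_neg, zpow_natCast] at hi; exact inv_mem_iff.1 hi
    intro c hc hcB
    obtain ⟨A, hA⟩ := id hc.2
    obtain ⟨B2, hB2⟩ := lemC H U (Vp U s hs 1) Q (U_le_Vp hs 1) (Vp_le hs hUQ hsQ 1)
      (norm_of_comm hQM hMU hUQ)
      (norm_of_comm hQM (hMU.trans (U_le_Vp hs 1)) (Vp_le hs hUQ hsQ 1)) (Nb B Q)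
      (fun g hg k hk => Nb_mul hg hk) B' (tier_up H hMU tier)
      {V | ∃ p : ℕ, 1 ≤ p ∧ V = Vp U s hs p} ⟨_, 1, le_rfl, rfl⟩
      (by
        rintro V ⟨p, hp, rfl⟩
        exact ⟨U_le_Vp hs p, Vp_dvd hs (one_dvd p), Vp_fin hs hp⟩)
      (by
        rintro V ⟨p, hp, rfl⟩ T
        choose r hr using bd1 (U := U) (s := s) hs0
        refine ⟨_, ⟨p * (T.sup r + 1), Nat.mul_pos hp (by omega), rfl⟩, Vp_dvd hs ⟨_, rfl⟩, ?_⟩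
        rintro t ht ⟨i, u, hu, e⟩
        have h1 := hr t _ u hu e
        have h2 : (r t : ℤ) ≤ T.sup r := by exact_mod_cast Finset.le_sup ht
        have h3 : i = 0 := by
          by_contra h3
          have h4 : 1 ≤ |i| := Int.one_le_abs h3
          rw [abs_mul, abs_of_nonneg (by positivity)] at h1
          push_cast at h1
          have h5 : (1 : ℤ) ≤ p := by exact_mod_cast hp
          have h6 : (0 : ℤ) ≤ ((T.sup r : ℕ) : ℤ) := by positivity
          have h7 : ((T.sup r : ℕ) : ℤ) + 1 ≤ p * (((T.sup r : ℕ) : ℤ) + 1) := by nlinarith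
          nlinarith
        rw [e, h3]
        simpa using hu)
      (by
        rintro V ⟨p, hp, rfl⟩
        exact good p hp) A
    refine walls H U s hs hs0 (Nb A (Vp U s hs 1) ∩ Nb B Q) ?_ B2 ?_ ?_ c hc ?_
    · rintro g ⟨h1, h2⟩ i u hu
      exact ⟨Nb_mul h1 ⟨i, u, hu, by simp⟩, Nb_mul h2 (mul_mem (zpow_mem hsQ i) (hUQ hu))⟩
    · intro c hc hcB n g hg
      obtain ⟨b, hb, x, ⟨i, u, hu, rfl⟩, rfl⟩ := hB2 c hc (fun g hg => (hcB g hg).1)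
        (fun g hg => (hcB g hg).2) n g hg
      exact ⟨i, b, hb, u, hu, by simp⟩
    · intro p hp c hc hcB
      exact good p hp c hc fun g hg => (hcB g hg).2
    · intro g hg
      exact ⟨Nb_mono (subset_refl A) (U_le_Vp hs 1) (hA.supp g hg), hcB g hg⟩

lemma listZ (H : Sys o S R nz) {M Q : Subgroup G}
    (hQM : ∀ x ∈ Q, ∀ y ∈ Q, x * y * x⁻¹ * y⁻¹ ∈ M) (B B' : Finset G)
    (tier : ∀ c, PP o S R M c → (∀ g, c g ≠ o → g ∈ Nb B Q) → ∀ n g, nz n c g → g ∈ Nb B' Q)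
    (l : List G) : (∀ t ∈ l, t ∈ Q) → ∀ U : Subgroup G, M ≤ U → U ≤ Q →
      (∀ V : Subgroup G, U ≤ V → V ≤ Q → (∀ t ∈ l, ∃ p ≥ 1, t ^ p ∈ V) →
        ∀ c, PP o S R V c → (∀ g, c g ≠ o → g ∈ Nb B Q) → Nilp nz c) →
      ∀ c, PP o S R U c → (∀ g, c g ≠ o → g ∈ Nb B Q) → Nilp nz c := by
  induction l with
  | nil =>
    intro _ U hMU hUQ h
    exact h U le_rfl hUQ (by simp)
  | cons t l ih =>
    intro hl U hMU hUQ h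
    have htQ : t ∈ Q := hl t (by simp)
    have ht := norm_of_comm hQM hMU hUQ htQ
    refine stepZ H hMU hUQ hQM B B' tier htQ ht fun p hp => ?_
    refine ih (fun t ht => hl t (by simp [ht])) _ (hMU.trans (U_le_Vp ht p))
      (Vp_le ht hUQ htQ p) fun V hV hVQ hVl => ?_
    refine h V ((U_le_Vp ht p).trans hV) hVQ fun t' ht' => ?_
    rcases List.mem_cons.1 ht' with rfl | ht'
    · exact ⟨p, hp, hV ⟨1, 1, one_mem _, by simp⟩⟩
    · exact hVl t' ht'

lemma finZ {M Q : Subgroup G} (hQM : ∀ x ∈ Q, ∀ y ∈ Q, x * y * x⁻¹ * y⁻¹ ∈ M) (l : List G) :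
    ∀ V : Subgroup G, M ≤ V → V ≤ Q → (∀ t ∈ l, t ∈ Q ∧ ∃ p ≥ 1, t ^ p ∈ V) →
      ∃ F : Finset G, ∀ x ∈ V ⊔ Subgroup.closure {t | t ∈ l}, ∃ r ∈ F, ∃ v ∈ V, x = r * v := by
  induction l with
  | nil =>
    intro V _ _ _
    exact ⟨{1}, fun x hx => ⟨1, by simp, x, by simpa using hx, by simp⟩⟩
  | cons t l ih =>
    intro V hMV hVQ hl
    obtain ⟨htQ, p, hp, hpV⟩ := hl t (by simp)
    have ht := norm_of_comm hQM hMV hVQ htQ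
    obtain ⟨F, hF⟩ := ih (Vp V t ht 1) (hMV.trans (U_le_Vp ht 1)) (Vp_le ht hVQ htQ 1)
      (fun t' ht' => ⟨(hl t' (by simp [ht'])).1, by
        obtain ⟨q, hq, hqV⟩ := (hl t' (by simp [ht'])).2
        exact ⟨q, hq, U_le_Vp ht 1 hqV⟩⟩)
    obtain ⟨F', hF'⟩ := Vp_fin ht hp
    have hVp : Vp V t ht p = V := by
      apply le_antisymm _ (U_le_Vp ht p)
      rintro x ⟨i, u, hu, rfl⟩
      rw [zpow_mul, zpow_natCast]
      exact mul_mem (zpow_mem hpV _) hu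
    rw [hVp] at hF'
    refine ⟨F * F', fun x hx => ?_⟩
    have hle : V ⊔ Subgroup.closure {t' | t' ∈ t :: l} ≤
        Vp V t ht 1 ⊔ Subgroup.closure {t | t ∈ l} := by
      refine sup_le ((U_le_Vp ht 1).trans le_sup_left) ?_
      rw [Subgroup.closure_le]
      intro t' ht'
      rcases List.mem_cons.1 ht' with rfl | ht'
      · exact Subgroup.mem_sup_left ⟨1, 1, one_mem _, by simp⟩
      · exact Subgroup.mem_sup_right (Subgroup.subset_closure ht')
    obtain ⟨r, hr, v, hv, rfl⟩ := hF x (hle hx)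
    obtain ⟨r', hr', v', hv', rfl⟩ := hF' v hv
    exact ⟨r * r', Finset.mul_mem_mul hr hr', v', hv', by rw [mul_assoc]⟩

lemma phase (H : Sys o S R nz) (M L : Subgroup G) (hML : M ≤ L) [M.Normal] [L.Normal]
    (hLM : ∀ x ∈ L, ∀ y ∈ L, x * y * x⁻¹ * y⁻¹ ∈ M)
    (LL : Set (Subgroup G)) (hne : LL.Nonempty)
    (hLL : ∀ V ∈ LL, M ≤ V ∧ V ≤ L ∧ ∃ Q : Finset G, ∀ l ∈ L, ∃ q ∈ Q, ∃ v ∈ V, l = q * v)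
    (small : ∀ V ∈ LL, ∀ T : Finset G, ∃ V' ∈ LL, V' ≤ V ∧ ∀ t ∈ T, t ∈ V' → t ∈ M)
    (good : ∀ V ∈ LL, ∀ c, PP o S R V c → Nilp nz c) :
    ∀ c, PP o S R M c → Nilp nz c := by
  intro c hc
  obtain ⟨A, hA⟩ := id hc.2
  obtain ⟨B2, hB2⟩ := lemC H M L ⊤ hML le_top (by rw [Subgroup.normalizer_eq_top])
    (by rw [Subgroup.normalizer_eq_top]) Set.univ (fun _ _ _ _ => trivial) {1}
    (fun c _ _ n g _ => ⟨1, by simp, g, trivial, by simp⟩) LL hne hLL small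
    (fun V hV c hc _ => good V hV c hc) A
  obtain ⟨F0, hF0⟩ := loc_supp H 0
  obtain ⟨F1, hF1⟩ := H.step
  let gens : Finset G := (A⁻¹ * (F0 * B2) ∪ B2⁻¹ * (F1 * B2)).filter (· ∈ L)
  let Q : Subgroup G := M ⊔ Subgroup.closure {t | t ∈ gens.toList}
  have hgQ : ∀ t ∈ gens, t ∈ Q := fun t ht =>
    Subgroup.mem_sup_right (Subgroup.subset_closure (Finset.mem_toList.2 ht))
  have hQL : Q ≤ L := by
    refine sup_le hML ?_
    rw [Subgroup.closure_le]
    intro t ht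
    exact (Finset.mem_filter.1 (Finset.mem_toList.1 ht)).2
  have hQM : ∀ x ∈ Q, ∀ y ∈ Q, x * y * x⁻¹ * y⁻¹ ∈ M := fun x hx y hy =>
    hLM x (hQL hx) y (hQL hy)
  have tier : ∀ c, PP o S R M c → (∀ g, c g ≠ o → g ∈ Nb A Q) → ∀ n g, nz n c g →
      g ∈ Nb B2 Q := by
    intro c hc hcA n
    have hL := hB2 c hc (fun g hg => Nb_mono (subset_refl A) hQL (hcA g hg)) (fun _ _ => trivial)
    induction n with
    | zero =>
      intro g hg
      obtain ⟨b, hb, l, hl, rfl⟩ := hL _ g hg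
      obtain ⟨h, hh, hne⟩ := hF0 c hc.1 _ hg
      obtain ⟨a, ha, q, hq, e⟩ := hcA _ hne
      have e2 : a⁻¹ * (h * b) = q * l⁻¹ := by
        rw [eq_mul_inv_iff_mul_eq, mul_assoc, mul_assoc, e]; simp
      have h1 : a⁻¹ * (h * b) ∈ gens := Finset.mem_filter.2 ⟨Finset.mem_union_left _
        (Finset.mul_mem_mul (Finset.inv_mem_inv ha) (Finset.mul_mem_mul hh hb)), by
          rw [e2]; exact mul_mem (hQL hq) (inv_mem hl)⟩
      have h2 := hgQ _ h1
      rw [e2] at h2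
      refine ⟨b, hb, l, ?_, rfl⟩
      have := mul_mem (inv_mem h2) hq
      simpa using this
    | succ n ih =>
      intro g hg
      obtain ⟨b, hb, l, hl, rfl⟩ := hL _ g hg
      have h0 : ∃ h ∈ F1, nz n c (h * (b * l)) := by
        by_contra h0
        push Not at h0
        exact hF1 c hc.1 n _ h0 hg
      obtain ⟨h, hh, hne⟩ := h0
      obtain ⟨a, ha, q, hq, e⟩ := ih _ hne
      have e2 : a⁻¹ * (h * b) = q * l⁻¹ := by
        rw [eq_mul_inv_iff_mul_eq, mul_assoc, mul_assoc, e]; simp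
      have h1 : a⁻¹ * (h * b) ∈ gens := Finset.mem_filter.2 ⟨Finset.mem_union_right _
        (Finset.mul_mem_mul (Finset.inv_mem_inv ha) (Finset.mul_mem_mul hh hb)), by
          rw [e2]; exact mul_mem (hQL hq) (inv_mem hl)⟩
      have h2 := hgQ _ h1
      rw [e2] at h2
      refine ⟨b, hb, l, ?_, rfl⟩
      have := mul_mem (inv_mem h2) hq
      simpa using this
  refine listZ H hQM A B2 tier gens.toList (fun t ht => hgQ t (Finset.mem_toList.1 ht)) M le_rfl
    le_sup_left ?_ c hc (fun g hg => Nb_mono (subset_refl A) (le_sup_left : M ≤ Q) (hA.supp g hg))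
  intro V hMV hVQ hVl x hx hxB
  obtain ⟨F, hF⟩ := finZ hQM gens.toList V hMV hVQ
    (fun t ht => ⟨hgQ t (Finset.mem_toList.1 ht), hVl t ht⟩)
  have hQF : ∀ q ∈ Q, ∃ r ∈ F, ∃ v ∈ V, q = r * v := fun q hq =>
    hF q ((sup_le_sup_right hMV _ : Q ≤ _) hq)
  obtain ⟨Ax, hAx⟩ := id hx.2
  refine nil_of_bdd H hx.1 V hAx.per (B2 * F) 0 fun n _ g hg => ?_
  obtain ⟨b, hb, q, hq, rfl⟩ := tier_up H hMV tier x hx hxB n g hg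
  obtain ⟨r, hr, v, hv, rfl⟩ := hQF q hq
  exact ⟨b * r, Finset.mul_mem_mul hb hr, v, hv, by rw [mul_assoc]⟩

end abs5

section abs6

open Classical Pointwise

variable {G X : Type} [Group G]
variable {o : X} {S : Finset G} {R : G → X → X → Prop} {nz : ℕ → (G → X) → G → Prop}

/-- closure in the profinite topology -/
def pcl (D : Subgroup G) : Subgroup G :=
  ⨅ N : {N : Subgroup G // N.Normal ∧ N.FiniteIndex}, D ⊔ N.1

lemma mem_pcl {D : Subgroup G} {x : G} :
    x ∈ pcl D ↔ ∀ N : Subgroup G, N.Normal → N.FiniteIndex → x ∈ D ⊔ N := by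
  unfold pcl
  rw [Subgroup.mem_iInf]
  exact ⟨fun h N h1 h2 => h ⟨N, h1, h2⟩, fun h N => h N.1 N.2.1 N.2.2⟩

lemma le_pcl (D : Subgroup G) : D ≤ pcl D := fun x hx =>
  mem_pcl.2 fun _ _ _ => Subgroup.mem_sup_left hx

lemma pcl_mono {D D' : Subgroup G} (h : D ≤ D') : pcl D ≤ pcl D' := fun x hx =>
  mem_pcl.2 fun N h1 h2 => sup_le_sup_right h N (mem_pcl.1 hx N h1 h2)

lemma pcl_normal {D : Subgroup G} (hD : D.Normal) : (pcl D).Normal := by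
  unfold pcl
  apply Subgroup.normal_iInf_normal
  rintro ⟨N, hN, _⟩
  exact Subgroup.sup_normal D N

lemma pcl_comm {D : Subgroup G} {x y : G} (hx : x ∈ pcl D) (hy : y ∈ pcl D) :
    x * y * x⁻¹ * y⁻¹ ∈ pcl ⁅D, D⁆ := by
  refine mem_pcl.2 fun N h1 h2 => ?_
  obtain ⟨d, hd, n, hn, rfl⟩ := Subgroup.mem_sup_of_normal_right.1 (mem_pcl.1 hx N h1 h2)
  obtain ⟨d', hd', n', hn', rfl⟩ := Subgroup.mem_sup_of_normal_right.1 (mem_pcl.1 hy N h1 h2)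
  refine Subgroup.mem_sup_of_normal_right.2 ⟨d * d' * d⁻¹ * d'⁻¹,
    Subgroup.commutator_mem_commutator hd hd',
    (d * d' * d⁻¹ * d'⁻¹)⁻¹ * (d * n * (d' * n') * (d * n)⁻¹ * (d' * n')⁻¹), ?_, by group⟩
  rw [← QuotientGroup.eq]
  have e1 : ((d * n : G) : G ⧸ N) = d := QuotientGroup.mk_mul_of_mem d hn
  have e2 : ((d' * n' : G) : G ⧸ N) = d' := QuotientGroup.mk_mul_of_mem d' hn'
  simp only [QuotientGroup.mk_mul, QuotientGroup.mk_inv] at e1 e2 ⊢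
  rw [e1, e2]

lemma relreps (L N : Subgroup G) (hN : N.FiniteIndex) :
    ∃ Q : Finset G, ∀ l ∈ L, ∃ q ∈ Q, ∃ v ∈ L ⊓ N, l = q * v := by
  have : (N.subgroupOf L).FiniteIndex := inferInstance
  have : Fintype (L ⧸ N.subgroupOf L) := Fintype.ofFinite _
  refine ⟨Finset.univ.image (fun q : L ⧸ N.subgroupOf L => ((q.out : L) : G)), fun l hl => ?_⟩
  obtain ⟨m, hm⟩ := QuotientGroup.mk_out_eq_mul (N.subgroupOf L) ⟨l, hl⟩
  refine ⟨_, Finset.mem_image.2 ⟨((⟨l, hl⟩ : L) : L ⧸ N.subgroupOf L), Finset.mem_univ _, rfl⟩,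
    ((m : L) : G)⁻¹, ⟨L.inv_mem (m : L).2, N.inv_mem (Subgroup.mem_subgroupOf.1 m.2)⟩, ?_⟩
  rw [hm]; simp

/-- derived series inside `G` -/
def dser (H0 : Subgroup G) : ℕ → Subgroup G
  | 0 => H0
  | n + 1 => ⁅dser H0 n, dser H0 n⁆

lemma dser_eq (H0 : Subgroup G) (n : ℕ) : dser H0 n = (derivedSeries H0 n).map H0.subtype := by
  induction n with
  | zero => rw [dser, derivedSeries_zero, ← MonoidHom.range_eq_map, Subgroup.range_subtype]
  | succ n ih => rw [dser, derivedSeries_succ, Subgroup.map_commutator, ih]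

lemma dser_normal (H0 : Subgroup G) (h : H0.Normal) (n : ℕ) : (dser H0 n).Normal := by
  induction n with
  | zero => exact h
  | succ n ih => rw [dser]; exact Subgroup.commutator_normal _ _

lemma grp_step (H : Sys o S R nz) (D : Subgroup G) (hD : D.Normal)
    (P : ∀ N : Subgroup G, N.Normal → N.FiniteIndex → ∀ c, PP o S R (pcl D ⊓ N) c → Nilp nz c) :
    ∀ N : Subgroup G, N.Normal → N.FiniteIndex → ∀ c, PP o S R (pcl ⁅D, D⁆ ⊓ N) c →
      Nilp nz c := by
  intro N hN hNf
  have hDD : ⁅D, D⁆ ≤ D := Subgroup.commutator_le_left D D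
  have := pcl_normal hD
  have : (⁅D, D⁆ : Subgroup G).Normal := Subgroup.commutator_normal _ _
  have := pcl_normal this
  set M := pcl ⁅D, D⁆ ⊓ N with hM
  set L := pcl D ⊓ N with hL
  have hML : M ≤ L := inf_le_inf_right N (pcl_mono hDD)
  have : M.Normal := by rw [hM]; infer_instance
  have : L.Normal := by rw [hL]; infer_instance
  refine phase H M L hML ?_ {V | ∃ N' : Subgroup G, N'.Normal ∧ N'.FiniteIndex ∧ V = M ⊔ (L ⊓ N')}
    ⟨_, ⊤, inferInstance, inferInstance, rfl⟩ ?_ ?_ ?_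
  · intro x hx y hy
    exact ⟨pcl_comm hx.1 hy.1, N.mul_mem (N.mul_mem (N.mul_mem hx.2 hy.2) (N.inv_mem hx.2))
      (N.inv_mem hy.2)⟩
  · rintro V ⟨N', hN', hNf', rfl⟩
    refine ⟨le_sup_left, sup_le hML inf_le_left, ?_⟩
    obtain ⟨Q, hQ⟩ := relreps L N' hNf'
    refine ⟨Q, fun l hl => ?_⟩
    obtain ⟨q, hq, v, hv, e⟩ := hQ l hl
    exact ⟨q, hq, v, Subgroup.mem_sup_right hv, e⟩
  · rintro V ⟨N', hN', hNf', rfl⟩ T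
    have : ∃ N2 : Subgroup G, N2.Normal ∧ N2.FiniteIndex ∧ N2 ≤ N' ∧
        ∀ t ∈ T, t ∈ M ⊔ (L ⊓ N2) → t ∈ M := by
      induction T using Finset.induction_on with
      | empty => exact ⟨N', hN', hNf', le_rfl, by simp⟩
      | insert a T _ ih =>
        obtain ⟨N2, h1, h2, h3, h4⟩ := ih
        by_cases ha : a ∈ L → a ∈ M
        · refine ⟨N2, h1, h2, h3, fun t ht ht' => ?_⟩
          rcases Finset.mem_insert.1 ht with rfl | ht
          · exact ha ((sup_le hML inf_le_left : M ⊔ (L ⊓ N2) ≤ L) ht')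
          · exact h4 t ht ht'
        · push Not at ha
          have h5 : a ∉ pcl ⁅D, D⁆ := fun h => ha.2 ⟨h, ha.1.2⟩
          rw [mem_pcl] at h5
          push Not at h5
          obtain ⟨N3, h6, h7, h8⟩ := h5
          refine ⟨N2 ⊓ N3, inferInstance, inferInstance, inf_le_left.trans h3, ?_⟩
          intro t ht ht'
          rcases Finset.mem_insert.1 ht with rfl | ht
          · refine absurd ?_ h8
            have hle : M ⊔ (L ⊓ (N2 ⊓ N3)) ≤ ⁅D, D⁆ ⊔ N3 := by
              refine sup_le (fun x hx => mem_pcl.1 hx.1 N3 h6 h7) ?_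
              exact (inf_le_right.trans inf_le_right).trans le_sup_right
            exact hle ht'
          · exact h4 t ht (sup_le_sup_left (inf_le_inf_left L inf_le_left) M ht')
    obtain ⟨N2, h1, h2, h3, h4⟩ := this
    exact ⟨_, ⟨N2, h1, h2, rfl⟩, sup_le_sup_left (inf_le_inf_left L h3) M, h4⟩
  · rintro V ⟨N', hN', hNf', rfl⟩ c hc
    obtain ⟨Q, hQ⟩ := relreps L N' hNf'
    have h1 := PP_sub H (V := L ⊓ N') le_sup_right Q
      (fun u hu => hQ u ((sup_le hML inf_le_left : M ⊔ (L ⊓ N') ≤ L) hu)) hc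
    rw [hL, inf_assoc] at h1
    exact P (N ⊓ N') inferInstance inferInstance c h1

lemma grp_main (H : Sys o S R nz)
    (hRF : ∀ g : G, g ≠ 1 → ∃ N : Subgroup G, N.Normal ∧ N.FiniteIndex ∧ g ∉ N)
    (hVS : ∃ K : Subgroup G, K.FiniteIndex ∧ Group.IsSolvable K) :
    ∀ c, PP o S R (⊥ : Subgroup G) c → Nilp nz c := by
  obtain ⟨K, hK, hKs⟩ := hVS
  have hsol : Group.IsSolvable K.normalCore :=
    Group.isSolvable_of_isSolvable_injective (Subgroup.inclusion_injective K.normalCore_le)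
  have hfi : K.normalCore.FiniteIndex := inferInstance
  have hP : ∀ n, ∀ N : Subgroup G, N.Normal → N.FiniteIndex →
      ∀ c, PP o S R (pcl (dser K.normalCore n) ⊓ N) c → Nilp nz c := by
    intro n
    induction n with
    | zero =>
      intro N hN hNf c hc
      have : (pcl (dser K.normalCore 0)).FiniteIndex :=
        Subgroup.finiteIndex_of_le (le_pcl K.normalCore)
      obtain ⟨Q, hQ⟩ := relreps ⊤ (pcl (dser K.normalCore 0) ⊓ N) inferInstance
      obtain ⟨A, hA⟩ := id hc.2
      refine nil_of_bdd H hc.1 _ hA.per Q 0 fun n _ g _ => ?_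
      obtain ⟨q, hq, v, hv, e⟩ := hQ g trivial
      exact ⟨q, hq, v, hv.2, e⟩
    | succ n ih => exact grp_step H _ (dser_normal _ K.normalCore_normal n) ih
  obtain ⟨d, hd⟩ := hsol.solvable
  have h1 := hP d ⊤ inferInstance inferInstance
  have h2 : pcl (dser K.normalCore d) ⊓ ⊤ = ⊥ := by
    rw [inf_top_eq, dser_eq, hd, Subgroup.map_bot, eq_bot_iff]
    intro x hx
    by_contra h3
    obtain ⟨N, h4, h5, h6⟩ := hRF x h3
    have := mem_pcl.1 hx N h4 h5
    rw [bot_sup_eq] at this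
    exact h6 this
  rwa [h2] at h1

/-- finitely supported pseudo-orbits are nilpotent -/
lemma fin_nil (H : Sys o S R nz)
    (hRF : ∀ g : G, g ≠ 1 → ∃ N : Subgroup G, N.Normal ∧ N.FiniteIndex ∧ g ∉ N)
    (hVS : ∃ K : Subgroup G, K.FiniteIndex ∧ Group.IsSolvable K)
    (c : G → X) (hc : PO S R c) (A : Finset G) (hA : ∀ g, c g ≠ o → g ∈ A) : Nilp nz c := by
  refine grp_main H hRF hVS c ⟨hc, A.filter (fun a => c a ≠ o), ?_, ?_, ?_, ?_⟩
  · intro u hu g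
    rw [Subgroup.mem_bot.1 hu, mul_one]
  · intro a ha
    exact (Finset.mem_filter.1 ha).2
  · intro g hg
    exact ⟨g, Finset.mem_filter.2 ⟨hA g hg, hg⟩, 1, one_mem _, by simp⟩
  · intro a _ a' _ s _ u hu _
    exact Subgroup.mem_bot.1 hu

/-- propagation backwards in time -/
lemma back (H : Sys o S R nz)
    (hRF : ∀ g : G, g ≠ 1 → ∃ N : Subgroup G, N.Normal ∧ N.FiniteIndex ∧ g ∉ N)
    (hVS : ∃ K : Subgroup G, K.FiniteIndex ∧ Group.IsSolvable K) :
    ∃ E : Finset G, ∃ N : ℕ, ∀ c, PO S R c → (∃ A : Finset G, ∀ g, c g ≠ o → g ∈ A) →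
      ∀ j, ∀ n ≥ N, nz (n + j) c 1 → ∃ e ∈ E, nz j c e := by
  obtain ⟨E, N, h⟩ := star H ⊥ {1}
  obtain ⟨D, hD⟩ := H.restart
  refine ⟨D * E, N, ?_⟩
  rintro c hc ⟨A, hA⟩ j n hn hnz
  obtain ⟨z, hz, hzs, hznz, -⟩ := hD c hc j
  obtain ⟨F, hF⟩ := loc_supp H j
  have hfin : ∀ g, z g ≠ o → g ∈ D⁻¹ * (F⁻¹ * A) := by
    intro g hg
    obtain ⟨d, hd, h1⟩ := hzs g hg
    obtain ⟨h, hh, h2⟩ := hF c hc _ h1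
    have := Finset.mul_mem_mul (Finset.inv_mem_inv hd) (Finset.mul_mem_mul (Finset.inv_mem_inv hh)
      (hA _ h2))
    simpa using this
  have h1 : ∃ g, z g ≠ o ∧ g ∈ Nb E ⊥ := by
    by_contra h1
    push Not at h1
    refine h z hz (fun u hu g => ?_) ⟨_, fun g hg => ⟨g, hfin g hg, 1, one_mem _, by simp⟩⟩
      (fin_nil H hRF hVS z hz _ hfin) h1 n hn 1 (by simp) ((hznz n 1).2 hnz)
    rw [Subgroup.mem_bot.1 hu, mul_one]
  obtain ⟨g, hg, e, he, u, hu, rfl⟩ := h1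
  rw [Subgroup.mem_bot.1 hu, mul_one] at hg
  obtain ⟨d, hd, h2⟩ := hzs e hg
  exact ⟨d * e, Finset.mul_mem_mul hd he, h2⟩

end abs6

section conc

open Classical Pointwise

variable {G X : Type} [Group G] [MetricSpace X] [CompactSpace X] [MulAction G X]

/-- uniform expansivity -/
lemma unif_exp (hcont : ∀ g : G, Continuous fun x : X => g • x) {Δ : ℝ}
    (hexp : ∀ x y : X, (∀ g : G, dist (g • x) (g • y) ≤ Δ) → x = y) {η : ℝ} (hη : 0 < η) :
    ∃ F : Finset G, ∀ x y : X, (∀ h ∈ F, dist (h • x) (h • y) ≤ Δ) → dist x y < η := by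
  have hK : IsCompact {p : X × X | η ≤ dist p.1 p.2} :=
    (isClosed_le continuous_const (continuous_fst.dist continuous_snd)).isCompact
  obtain ⟨F, hF⟩ := hK.elim_finite_subfamily_closed
    (fun g : G => {p : X × X | dist (g • p.1) (g • p.2) ≤ Δ})
    (fun g => isClosed_le (((hcont g).comp continuous_fst).dist ((hcont g).comp continuous_snd))
      continuous_const) (by
      rw [Set.eq_empty_iff_forall_notMem]
      rintro ⟨x, y⟩ ⟨h1, h2⟩
      have h3 := hexp x y (fun g => Set.mem_iInter.1 h2 g)
      have h4 : η ≤ dist x y := h1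
      rw [h3, dist_self] at h4
      linarith)
  refine ⟨F, fun x y h => ?_⟩
  by_contra h1
  have : (x, y) ∈ ({p : X × X | η ≤ dist p.1 p.2} ∩
      ⋂ g ∈ F, {p : X × X | dist (g • p.1) (g • p.2) ≤ Δ}) :=
    ⟨not_lt.1 h1, Set.mem_iInter₂.2 fun g hg => h g hg⟩
  rw [hF] at this
  exact this

/-- the shadowing point -/
noncomputable def shp (x₀ : X) (ε : ℝ) (c : G → X) : X :=
  if h : ∃ y : X, ∀ g : G, dist (c g) (g • y) < ε then Classical.choose h else x₀

/-- nonvanishing predicate -/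
def nzc (x₀ : X) (ε ρ : ℝ) (f : X → X) (n : ℕ) (c : G → X) (g : G) : Prop :=
  ρ < dist (g • f^[n] (shp x₀ ε c)) x₀

/-- a point is turned into a pseudo-orbit -/
noncomputable def rpt (x₀ : X) (ρ : ℝ) (D : Finset G) (x : X) : G → X := fun g =>
  if ∃ d ∈ D, ρ < dist ((d * g) • x) x₀ then g • x else x₀

lemma concrete (hcont : ∀ g : G, Continuous fun x : X => g • x)
    (x₀ : X) (hx₀ : ∀ g : G, g • x₀ = x₀)
    (hexp : ∃ Δ : ℝ, 0 < Δ ∧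
      ∀ x y : X, (∀ g : G, dist (g • x) (g • y) ≤ Δ) → x = y)
    (hshadow : ∃ S : Finset G, Subgroup.closure (S : Set G) = ⊤ ∧
      ∀ ε : ℝ, 0 < ε → ∃ δ : ℝ, 0 < δ ∧
        ∀ c : G → X, (∀ (g : G), ∀ s ∈ S, dist (s • c g) (c (s * g)) < δ) →
          ∃ y : X, ∀ g : G, dist (c g) (g • y) < ε)
    (f : X → X) (hf : Continuous f) (hf₀ : f x₀ = x₀)
    (hfeq : ∀ (g : G) (x : X), f (g • x) = g • f x)
    (hAN : ∀ x : X, Filter.Tendsto (fun n => f^[n] x) Filter.atTop (nhds x₀)) :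
    ∃ (S : Finset G) (R : G → X → X → Prop) (nz : ℕ → (G → X) → G → Prop) (ρ : ℝ), 0 < ρ ∧
      Sys x₀ S R nz ∧ (∀ x : X, (∀ g : G, dist (g • x) x₀ ≤ ρ) → x = x₀) ∧
      ∀ x : X, (∃ E : Finset G, ∀ g : G, g ∉ E → dist (g • x) x₀ < ρ) → ∃ c, PO S R c ∧
        (∃ A : Finset G, ∀ g, c g ≠ x₀ → g ∈ A) ∧ 
        ∀ n g, nz n c g ↔ ρ < dist (g • f^[n] x) x₀ := by
  obtain ⟨Δ, hΔ, hexp⟩ := hexp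
  obtain ⟨S, -, hsh⟩ := hshadow
  obtain ⟨ε, hε⟩ : ∃ ε : ℝ, ε = Δ / 4 := ⟨_, rfl⟩
  obtain ⟨ρ, hρ⟩ : ∃ ρ : ℝ, ρ = Δ / 2 := ⟨_, rfl⟩
  have hε0 : 0 < ε := by rw [hε]; positivity
  have hρ0 : 0 < ρ := by rw [hρ]; positivity
  obtain ⟨δ, hδ, hsh⟩ := hsh ε hε0
  have hfn : ∀ n (g : G) (x : X), f^[n] (g • x) = g • f^[n] x := by
    intro n
    induction n with
    | zero => intro g x; rfl
    | succ n ih => intro g x; rw [Function.iterate_succ_apply, hfeq, ih]; rfl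
  have hf0n : ∀ n, f^[n] x₀ = x₀ := fun n => Function.iterate_fixed hf₀ n
  obtain ⟨R, hR⟩ : ∃ R : G → X → X → Prop, R = fun s x y => dist (s • x) y < δ := ⟨_, rfl⟩
  have hPO : ∀ c, PO S R c ↔ ∀ (g : G), ∀ s ∈ S, dist (s • c g) (c (s * g)) < δ := by
    intro c; rw [hR]; rfl
  have hspec : ∀ c, PO S R c → ∀ g, dist (c g) (g • shp x₀ ε c) < ε := by
    intro c hc
    have h := hsh c ((hPO c).1 hc)
    unfold shp
    rw [dif_pos h]
    exact Classical.choose_spec h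
  have huniq : ∀ c, PO S R c → ∀ y, (∀ g, dist (c g) (g • y) < ε) → shp x₀ ε c = y := by
    intro c hc y hy
    refine hexp _ _ fun g => ?_
    have := dist_triangle_left (g • shp x₀ ε c) (g • y) (c g)
    have h1 := hspec c hc g
    have h2 := hy g
    linarith
  have hnil : ∀ x : X, (∀ g : G, dist (g • x) x₀ ≤ ρ) → x = x₀ := by
    intro x hx
    refine hexp _ _ fun g => ?_
    rw [hx₀]
    have := hx g
    linarith
  have huc : ∀ n, ∀ η > 0, ∃ η' > 0, ∀ x y : X, dist x y < η' → dist (f^[n] x) (f^[n] y) < η := by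
    intro n η hη
    have h1 := CompactSpace.uniformContinuous_of_continuous (hf.iterate n)
    obtain ⟨η', h2, h3⟩ := Metric.uniformContinuous_iff.1 h1 η hη
    exact ⟨η', h2, fun x y h => h3 h⟩
  have hloc : ∀ n, ∀ η > 0, ∃ F : Finset G, ∀ c c', PO S R c → PO S R c' → ∀ g,
      (∀ h ∈ F, c (h * g) = c' (h * g)) →
      dist (g • f^[n] (shp x₀ ε c)) (g • f^[n] (shp x₀ ε c')) < η := by
    intro n η hη
    obtain ⟨η', h1, h2⟩ := huc n η hη
    obtain ⟨F, hF⟩ := unif_exp hcont hexp h1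
    refine ⟨F, fun c c' hc hc' g h => ?_⟩
    rw [← hfn, ← hfn]
    apply h2
    apply hF
    intro k hk
    have h3 := hspec c hc (k * g)
    have h4 := hspec c' hc' (k * g)
    rw [← h k hk] at h4
    have := dist_triangle_left ((k * g) • shp x₀ ε c) ((k * g) • shp x₀ ε c') (c (k * g))
    rw [← mul_smul, ← mul_smul]
    linarith
  have hzPO : PO S R (fun _ => x₀) := by
    rw [hPO]; intro g s _; rw [hx₀, dist_self]; exact hδ
  have hz : shp x₀ ε (fun _ : G => x₀) = x₀ := huniq _ hzPO _ fun g => by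
    rw [hx₀, dist_self]; exact hε0
  have hshift : ∀ c, PO S R c → ∀ k, shp x₀ ε (fun x => c (x * k)) = k • shp x₀ ε c := by
    intro c hc k
    apply huniq _ (hc.shift k)
    intro g
    rw [← mul_smul]
    exact hspec c hc (g * k)
  have han : ∀ x : X, ∀ g : G, ∃ N, ∀ n ≥ N, dist (g • f^[n] x) x₀ < ρ := by
    intro x g
    obtain ⟨N, hN⟩ := Metric.tendsto_atTop.1 (hAN (g • x)) ρ hρ0
    refine ⟨N, fun n hn => ?_⟩
    rw [← hfn]
    exact hN n hn
  obtain ⟨F0, hF0⟩ := unif_exp hcont hexp (lt_min hδ hε0)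
  have hF0' : ∀ y : X, (∀ h ∈ F0, dist (h • y) x₀ ≤ ρ) → dist y x₀ < min δ ε := by
    intro y hy
    apply hF0
    intro h hh
    rw [hx₀]
    have := hy h hh
    linarith
  obtain ⟨D1, hD1⟩ : ∃ D1 : Finset G, D1 = F0 ∪ F0 * S := ⟨_, rfl⟩
  have hrp1 : ∀ x : X, ∀ g, (¬ ∃ d ∈ D1, ρ < dist ((d * g) • x) x₀) →
      dist (g • x) x₀ < min δ ε ∧ ∀ s ∈ S, dist ((s * g) • x) x₀ < min δ ε := by
    intro x g h
    push Not at h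
    constructor
    · apply hF0'
      intro k hk
      rw [← mul_smul]
      exact h k (by rw [hD1]; exact Finset.mem_union_left _ hk)
    · intro s hs
      apply hF0'
      intro k hk
      rw [← mul_smul, ← mul_assoc]
      exact h (k * s) (by rw [hD1]; exact Finset.mem_union_right _ (Finset.mul_mem_mul hk hs))
  have hrpPO : ∀ x : X, PO S R (rpt x₀ ρ D1 x) := by
    intro x
    rw [hPO]
    intro g s hs
    unfold rpt
    by_cases h1 : ∃ d ∈ D1, ρ < dist ((d * g) • x) x₀ <;>
      by_cases h2 : ∃ d ∈ D1, ρ < dist ((d * (s * g)) • x) x₀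
    · rw [if_pos h1, if_pos h2, mul_smul, dist_self]; exact hδ
    · rw [if_pos h1, if_neg h2, ← mul_smul]
      exact lt_of_lt_of_le (hrp1 x _ h2).1 (min_le_left _ _)
    · rw [if_neg h1, if_pos h2, hx₀, dist_comm]
      exact lt_of_lt_of_le ((hrp1 x _ h1).2 s hs) (min_le_left _ _)
    · rw [if_neg h1, if_neg h2, hx₀, dist_self]; exact hδ
  have hrpsh : ∀ x : X, shp x₀ ε (rpt x₀ ρ D1 x) = x := by
    intro x
    apply huniq _ (hrpPO x)
    intro g
    unfold rpt
    split_ifs with h1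
    · rw [dist_self]; exact hε0
    · rw [dist_comm]
      exact lt_of_lt_of_le (hrp1 x g h1).1 (min_le_right _ _)
  have hrpne : ∀ x : X, ∀ g, rpt x₀ ρ D1 x g ≠ x₀ → ∃ d ∈ D1, ρ < dist ((d * g) • x) x₀ := by
    intro x g h
    by_contra h1
    apply h
    unfold rpt
    rw [if_neg h1]
  refine ⟨S, R, nzc x₀ ε ρ f, ρ, hρ0, ?_, hnil, ?_⟩
  · constructor
    case R0 =>
      intro s; rw [hR]; show dist (s • x₀) x₀ < δ
      rw [hx₀, dist_self]; exact hδ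
    case tr =>
      intro c hc k n g
      unfold nzc
      rw [hshift c hc, hfn, mul_smul]
    case cont =>
      intro c hc n g h
      obtain ⟨F, hF⟩ := hloc n _ (sub_pos.2 h)
      refine ⟨F * {g}, fun c' hc' hcc => ?_⟩
      have h1 := hF c c' hc hc' g fun k hk =>
        (hcc _ (Finset.mul_mem_mul hk (Finset.mem_singleton_self g))).symm
      have h2 := dist_triangle (g • f^[n] (shp x₀ ε c)) (g • f^[n] (shp x₀ ε c')) x₀
      unfold nzc at h ⊢
      linarith
    case loc =>
      intro n
      obtain ⟨F, hF⟩ := hloc n ρ hρ0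
      refine ⟨F, fun c c' hc hc' g h h0 h1 => ?_⟩
      have h2 := hnil (f^[n] (shp x₀ ε c)) fun g => not_lt.1 (h0 g)
      have h3 := hF c c' hc hc' g h
      rw [h2, hx₀, dist_comm] at h3
      unfold nzc at h1
      linarith
    case sep =>
      intro t
      obtain ⟨F, hF⟩ := hloc t ρ hρ0
      refine ⟨F * F⁻¹, fun c c' hc hc' hu hd h0 n hn g => ?_⟩
      have h2 := hnil (f^[t] (shp x₀ ε c)) fun g => not_lt.1 (h0 g)
      have h3 : f^[t] (shp x₀ ε (un x₀ c c')) = f^[t] (shp x₀ ε c') := by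
        refine hexp _ _ fun g => ?_
        by_cases h4 : ∃ h ∈ F, c (h * g) ≠ x₀
        · obtain ⟨h, hh, hne⟩ := h4
          have h5 : ∀ k ∈ F, c' (k * g) = x₀ := by
            intro k hk
            have := hd _ hne (k * h⁻¹) (Finset.mul_mem_mul hk (Finset.inv_mem_inv hh))
            simpa [mul_assoc] using this
          have h6 := hF _ _ hu hc g fun k hk => un_left (h5 k hk)
          have h7 := hF _ _ hc' hzPO g h5
          rw [h2, hx₀] at h6
          rw [hz, hf0n, hx₀] at h7
          have := dist_triangle_right (g • f^[t] (shp x₀ ε (un x₀ c c')))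
            (g • f^[t] (shp x₀ ε c')) x₀
          linarith
        · push Not at h4
          have h6 := hF _ _ hu hc' g fun k hk => un_right (h4 k hk)
          linarith
      obtain ⟨m, rfl⟩ := Nat.exists_eq_add_of_le' hn
      unfold nzc
      rw [Function.iterate_add_apply, Function.iterate_add_apply, h3]
    case zero =>
      intro n g h
      unfold nzc at h
      rw [hz, hf0n, hx₀, dist_self] at h
      linarith
    case step =>
      obtain ⟨η', h1, h2⟩ := huc 1 ρ hρ0
      obtain ⟨F, hF⟩ := unif_exp hcont hexp h1
      refine ⟨F, fun c hc n g h h' => ?_⟩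
      unfold nzc at h h'
      rw [Function.iterate_succ_apply', ← hfeq] at h'
      have h3 := h2 (g • f^[n] (shp x₀ ε c)) x₀ (hF _ _ fun k hk => by
        have := h k hk
        rw [mul_smul] at this
        rw [hx₀]
        linarith)
      rw [hf0n, Function.iterate_one] at h3
      linarith
    case an =>
      intro c hc g
      obtain ⟨N, hN⟩ := han (shp x₀ ε c) g
      exact ⟨N, fun n hn h => absurd (hN n hn) (not_lt.2 h.le)⟩
    case baire =>
      rintro N ⟨c0, hc0⟩ hNP D
      let Y : Set X := closure (shp x₀ ε '' N)
      have hY : IsCompact Y := isClosed_closure.isCompact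
      have : CompactSpace Y := isCompact_iff_compactSpace.1 hY
      have hyY : ∀ c ∈ N, shp x₀ ε c ∈ Y := fun c hc => subset_closure ⟨c, hc, rfl⟩
      have : Nonempty Y := ⟨⟨_, hyY c0 hc0⟩⟩
      let C : ℕ → Set Y := fun k => {x | ∀ n ≥ k, ∀ d ∈ D, dist (d • f^[n] (x : X)) x₀ ≤ ρ}
      have hC : ∀ k, IsClosed (C k) := by
        intro k
        have : C k = ⋂ n ≥ k, ⋂ d ∈ D, {x : Y | dist (d • f^[n] (x : X)) x₀ ≤ ρ} := by
          ext x; simp [C]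
        rw [this]
        refine isClosed_biInter fun n _ => isClosed_biInter fun d _ => ?_
        refine isClosed_le (Continuous.dist ?_ continuous_const) continuous_const
        exact (hcont d).comp ((hf.iterate n).comp continuous_subtype_val)
      have hU : ⋃ k, C k = Set.univ := by
        rw [Set.eq_univ_iff_forall]
        intro x
        choose M hM using han (x : X)
        refine Set.mem_iUnion.2 ⟨D.sup M, fun n hn d hd => ?_⟩
        exact (hM d n (le_trans (Finset.le_sup hd) hn)).le
      obtain ⟨k, y0, hy0⟩ := nonempty_interior_of_iUnion_of_closed hC hU
      obtain ⟨r, hr, hb⟩ := Metric.isOpen_iff.1 isOpen_interior y0 hy0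
      obtain ⟨z, ⟨y, hy, rfl⟩, hyr⟩ := Metric.mem_closure_iff.1 y0.2 r hr
      have hyI : (⟨shp x₀ ε y, hyY y hy⟩ : Y) ∈ interior (C k) := hb (by
        rw [Metric.mem_ball, dist_comm]; exact hyr)
      obtain ⟨r', hr', hb'⟩ := Metric.isOpen_iff.1 isOpen_interior _ hyI
      obtain ⟨F, hF⟩ := hloc 0 r' hr'
      refine ⟨y, hy, F, k, fun c hc hcy n hn d hd h => ?_⟩
      have h1 := hF c y (hNP c hc) (hNP y hy) 1 (by simpa using hcy)
      simp only [one_smul, Function.iterate_zero, id] at h1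
      have h2 := interior_subset (hb' (show (⟨shp x₀ ε c, hyY c hc⟩ : Y) ∈ _ from h1)) n hn d hd
      exact absurd h2 (not_le.2 h)
    case restart =>
      refine ⟨D1, fun c hc T => ⟨rpt x₀ ρ D1 (f^[T] (shp x₀ ε c)), hrpPO _, ?_, ?_, ?_⟩⟩
      · intro g hg
        exact hrpne _ g hg
      · intro n g
        unfold nzc
        rw [hrpsh, Function.iterate_add_apply]
      · intro u hu g
        have h1 : (fun x => c (x * u)) = c := funext hu
        have h2 := hshift c hc u
        rw [h1] at h2
        have h3 : u • f^[T] (shp x₀ ε c) = f^[T] (shp x₀ ε c) := by rw [← hfn, ← h2]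
        unfold rpt
        simp only [← mul_assoc, mul_smul _ u, h3]
  · rintro x ⟨E, hE⟩
    refine ⟨rpt x₀ ρ D1 x, hrpPO x, ⟨D1⁻¹ * E, fun g hg => ?_⟩, fun n g => ?_⟩
    · obtain ⟨d, hd, h⟩ := hrpne x g hg
      have h1 : d * g ∈ E := by
        by_contra h1
        have := hE _ h1
        linarith
      simpa using Finset.mul_mem_mul (Finset.inv_mem_inv hd) h1
    · unfold nzc
      rw [hrpsh]

end conc

/-- Let `G` be a finitely generated residually finite virtually
solvable group, and `(G, X, 0)` an expansive pointed dynamical system with the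
shadowing property (for some finite generating set) and dense homoclinic points.
Then every asymptotically nilpotent endomorphism is nilpotent. -/
theorem statement12 {G X : Type} [Group G] [MetricSpace X] [CompactSpace X]
    [MulAction G X]
    (hcont : ∀ g : G, Continuous fun x : X => g • x)
    (x₀ : X) (hx₀ : ∀ g : G, g • x₀ = x₀)
    (hFG : Group.FG G) (hRF : ResiduallyFinite G)
    (hVS : ∃ H : Subgroup G, H.FiniteIndex ∧ IsSolvable H)
    (hexp : ∃ Δ : ℝ, 0 < Δ ∧
      ∀ x y : X, (∀ g : G, dist (g • x) (g • y) ≤ Δ) → x = y)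
    (hshadow : ∃ S : Finset G, Subgroup.closure (S : Set G) = ⊤ ∧
      ∀ ε : ℝ, 0 < ε → ∃ δ : ℝ, 0 < δ ∧
        ∀ c : G → X, (∀ (g : G), ∀ s ∈ S, dist (s • c g) (c (s * g)) < δ) →
          ∃ y : X, ∀ g : G, dist (c g) (g • y) < ε)
    (hhomo : Dense {x : X | Homoclinic G x₀ x})
    (f : X → X) (hf : Continuous f) (hf₀ : f x₀ = x₀)
    (hfeq : ∀ (g : G) (x : X), f (g • x) = g • f x)
    (hAN : ∀ x : X, Filter.Tendsto (fun n => f^[n] x) Filter.atTop (nhds x₀)) :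
    ∃ n : ℕ, ∀ x : X, f^[n] x = x₀ := by
  have hRF' : ∀ g : G, g ≠ 1 → ∃ N : Subgroup G, N.Normal ∧ N.FiniteIndex ∧ g ∉ N := by
    intro g hg
    obtain ⟨Q, _, φ, hQ, hφ⟩ := hRF g hg
    exact ⟨φ.ker, inferInstance, Subgroup.finiteIndex_ker φ, fun h => hφ (MonoidHom.mem_ker.1 h)⟩
  obtain ⟨S, R, nz, ρ, hρ, HS, hexpo, hcode⟩ :=
    concrete hcont x₀ hx₀ hexp hshadow f hf hf₀ hfeq hAN
  obtain ⟨E, N, hback⟩ := back HS hRF' hVS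
  have hfn : ∀ n (g : G) (x : X), f^[n] (g • x) = g • f^[n] x := by
    intro n
    induction n with
    | zero => intro g x; rfl
    | succ n ih => intro g x; rw [Function.iterate_succ_apply', Function.iterate_succ_apply', ih, hfeq]
  by_contra hcon
  push Not at hcon
  have key : ∀ n : ℕ, ∃ x : X, ∀ j ≤ n, ∃ e ∈ E, ρ ≤ dist (e • f^[j] x) x₀ := by
    intro n
    obtain ⟨x, hx⟩ := hcon (n + N)
    obtain ⟨g, hg⟩ : ∃ g : G, ρ < dist (g • f^[n + N] x) x₀ := by
      by_contra h
      push Not at h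
      exact hx (hexpo _ h)
    have hopen : IsOpen {y : X | ρ < dist (f^[n + N] y) x₀} :=
      isOpen_lt continuous_const ((hf.iterate _).dist continuous_const)
    obtain ⟨z, hz1, hz2⟩ := hhomo.inter_open_nonempty _ hopen ⟨g • x, by
      simp only [Set.mem_setOf_eq]; rw [hfn]; exact hg⟩
    obtain ⟨c, hc, hA, hnz⟩ := hcode z (hz2 ρ hρ)
    refine ⟨z, fun j hj => ?_⟩
    have h1 : nz ((n + N - j) + j) c 1 := by
      rw [Nat.sub_add_cancel (by omega), hnz, one_smul]
      exact hz1
    obtain ⟨e, he, h2⟩ := hback c hc hA j (n + N - j) (by omega) h1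
    exact ⟨e, he, ((hnz _ _).1 h2).le⟩
  let C : ℕ → Set X := fun n => ⋂ j ∈ Set.Iic n, ⋃ e ∈ E, {x | ρ ≤ dist (e • f^[j] x) x₀}
  have hCcl : ∀ n, IsClosed (C n) := by
    intro n
    refine isClosed_biInter fun j _ => ?_
    refine E.finite_toSet.isClosed_biUnion fun e _ => ?_
    exact isClosed_le continuous_const
      (((hcont e).comp (hf.iterate _)).dist continuous_const)
  have hmem : ∀ n x, x ∈ C n ↔ ∀ j ≤ n, ∃ e ∈ E, ρ ≤ dist (e • f^[j] x) x₀ := by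
    intro n x
    simp [C]
  obtain ⟨x, hx⟩ := IsCompact.nonempty_iInter_of_sequence_nonempty_isCompact_isClosed C
    (fun n x hx => (hmem _ _).2 fun j hj => (hmem _ _).1 hx j (by omega))
    (fun n => (key n).imp fun x h => (hmem _ _).2 h)
    (hCcl 0).isCompact hCcl
  have hev : ∀ᶠ n in Filter.atTop, ∀ e ∈ E, dist (e • f^[n] x) x₀ < ρ := by
    rw [Filter.eventually_all_finset]
    intro e _
    have h := (Metric.tendsto_nhds.1 (hAN (e • x))) ρ hρ
    filter_upwards [h] with n hn
    rwa [hfn] at hn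
  obtain ⟨n, hn⟩ := hev.exists
  obtain ⟨e, he, h⟩ := (hmem n x).1 (Set.mem_iInter.1 hx n) n le_rfl
  exact absurd (hn e he) (not_lt.2 h)
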